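/- arXiv:2208.12455 — 10 statements merged into one kernel-verified Lean document; each statement's English description precedes it below -/
import Mathlib

section
/- Assume Hypothesis (H). Then ℓ² divides c²·λ. More precisely, for any two distinct classes Δ, Δ' ∈ C, the number of blocks B ∈ B meeting both Δ and Δ' nontrivially equals c²λ/ℓ². -/
/-- Double counting of the triples `(α, β, B)` with `α ∈ B ∩ S` and `β ∈ B ∩ T`. -/
lemma sum_card_inter_mul_card_inter {Ω : Type*} [DecidableEq Ω]
    (𝓑 : Finset (Finset Ω)) (S T : Finset Ω) :
    ∑ B ∈ 𝓑, (B ∩ S).card * (B ∩ T).card =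
      ∑ p ∈ S ×ˢ T, (𝓑.filter (fun B => p.1 ∈ B ∧ p.2 ∈ B)).card := by
  have h := Finset.sum_card_bipartiteAbove_eq_sum_card_bipartiteBelow (s := S ×ˢ T) (t := 𝓑)
    (fun p B => p.1 ∈ B ∧ p.2 ∈ B)
  refine Eq.trans (Finset.sum_congr rfl fun B _ => ?_) h.symm
  rw [← Finset.card_product]
  congr 1
  ext p
  simp only [Finset.bipartiteBelow, Finset.mem_product, Finset.mem_inter, Finset.mem_filter]
  tauto

theorem stmt_2
    {Ω : Type*} [Fintype Ω] [DecidableEq Ω]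
    (v k lam c d ℓ : ℕ)
    (𝓑 𝓒 : Finset (Finset Ω))
    (G : Subgroup (Equiv.Perm Ω))
    (hv : Fintype.card Ω = v)
    (hlam1 : 1 ≤ lam)
    (hkcard : ∀ B ∈ 𝓑, B.card = k)
    (hpairs : ∀ α β : Ω, α ≠ β → (𝓑.filter (fun B => α ∈ B ∧ β ∈ B)).card = lam)
    (hk2 : 2 < k) (hkv : k < v)
    (hGB : ∀ g ∈ G, ∀ B ∈ 𝓑, B.image ⇑g ∈ 𝓑)
    (hflag : ∀ B₁ ∈ 𝓑, ∀ B₂ ∈ 𝓑, ∀ α₁ ∈ B₁, ∀ α₂ ∈ B₂,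
        ∃ g ∈ G, B₁.image ⇑g = B₂ ∧ g α₁ = α₂)
    (hpart : ∀ ω : Ω, ∃! Δ, Δ ∈ 𝓒 ∧ ω ∈ Δ)
    (hdcard : 𝓒.card = d) (hd2 : 2 ≤ d)
    (hccard : ∀ Δ ∈ 𝓒, Δ.card = c) (hc2 : 2 ≤ c)
    (hGC : ∀ g ∈ G, ∀ Δ ∈ 𝓒, Δ.image ⇑g ∈ 𝓒)
    (hl2 : 2 ≤ ℓ)
    (hlcap : ∀ B ∈ 𝓑, ∀ Δ ∈ 𝓒, (B ∩ Δ).Nonempty → (B ∩ Δ).card = ℓ)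
    : ℓ ^ 2 ∣ c ^ 2 * lam ∧
      ∀ Δ ∈ 𝓒, ∀ Δ' ∈ 𝓒, Δ ≠ Δ' →
        (𝓑.filter (fun B => (B ∩ Δ).Nonempty ∧ (B ∩ Δ').Nonempty)).card * ℓ ^ 2 = c ^ 2 * lam := by
  have key : ∀ Δ ∈ 𝓒, ∀ Δ' ∈ 𝓒, Δ ≠ Δ' →
      (𝓑.filter (fun B => (B ∩ Δ).Nonempty ∧ (B ∩ Δ').Nonempty)).card * ℓ ^ 2
        = c ^ 2 * lam := by
    intro Δ hΔ Δ' hΔ' hne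
    have hpair : ∀ p ∈ Δ ×ˢ Δ', (𝓑.filter (fun B => p.1 ∈ B ∧ p.2 ∈ B)).card = lam := by
      intro p hp
      rw [Finset.mem_product] at hp
      refine hpairs _ _ fun h => hne ((hpart p.1).unique ⟨hΔ, hp.1⟩ ⟨hΔ', h ▸ hp.2⟩)
    have hblock : ∀ B ∈ 𝓑, (B ∩ Δ).card * (B ∩ Δ').card =
        if (B ∩ Δ).Nonempty ∧ (B ∩ Δ').Nonempty then ℓ ^ 2 else 0 := by
      intro B hB
      split_ifs with h
      · rw [hlcap B hB Δ hΔ h.1, hlcap B hB Δ' hΔ' h.2, sq]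
      · rw [mul_eq_zero, Finset.card_eq_zero, Finset.card_eq_zero,
          ← Finset.not_nonempty_iff_eq_empty, ← Finset.not_nonempty_iff_eq_empty]
        exact not_and_or.mp h
    have h := sum_card_inter_mul_card_inter 𝓑 Δ Δ'
    rw [Finset.sum_congr rfl hblock, Finset.sum_congr rfl hpair, ← Finset.sum_filter,
      Finset.sum_const, Finset.sum_const, Finset.card_product, hccard Δ hΔ, hccard Δ' hΔ',
      smul_eq_mul, smul_eq_mul, ← sq] at h
    exact h
  refine ⟨?_, key⟩
  obtain ⟨Δ, hΔ, Δ', hΔ', hne⟩ := Finset.one_lt_card.mp (hdcard ▸ hd2 : 1 < 𝓒.card)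
  exact Dvd.intro_left _ (key Δ hΔ Δ' hΔ' hne)
end

section
/- Assume Hypothesis (H). Then k − 1 − d(ℓ−1) ≥ 1 and ℓ − 1 ≤ (k − 1 − d(ℓ−1))·(ℓ−1) ≤ λ − 1. -/
/-- Counting pairs `(β, B)` with `α ≠ β ∈ B ∩ S` and `α ∈ B`, where every block through `α` meets
`S` in `m` points. -/
theorem card_blocks_through_mul {Ω : Type*} [DecidableEq Ω] {lam m : ℕ}
    {𝓑 : Finset (Finset Ω)}
    (hpairs : ∀ α β : Ω, α ≠ β → (𝓑.filter (fun B => α ∈ B ∧ β ∈ B)).card = lam)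
    {S : Finset Ω} {α : Ω} (hα : α ∈ S) (hm : ∀ B ∈ 𝓑, α ∈ B → (B ∩ S).card = m) :
    (𝓑.filter (fun B => α ∈ B)).card * (m - 1) = (S.card - 1) * lam := by
  have h := Finset.sum_card_bipartiteAbove_eq_sum_card_bipartiteBelow
    (s := 𝓑.filter (fun B => α ∈ B)) (t := S.erase α) (fun B β => β ∈ B)
  rw [Finset.sum_const_nat (m := m - 1), Finset.sum_const_nat (m := lam),
    Finset.card_erase_of_mem hα] at h
  · exact h
  · intro β hβ
    rw [← hpairs α β (Finset.ne_of_mem_erase hβ).symm, Finset.bipartiteBelow,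
      Finset.filter_filter]
  · intro B hB
    rw [Finset.mem_filter] at hB
    rw [← hm B hB.1 hB.2, ← Finset.card_erase_of_mem (Finset.mem_inter.2 ⟨hB.2, hα⟩)]
    congr 1
    ext β
    simp only [Finset.bipartiteAbove, Finset.mem_filter, Finset.mem_erase, Finset.mem_inter]
    tauto

/-- Fisher's inequality. -/
theorem card_points_le_card_blocks {Ω : Type*} [Fintype Ω] [DecidableEq Ω] {lam r : ℕ}
    {𝓑 : Finset (Finset Ω)}
    (hpairs : ∀ α β : Ω, α ≠ β → (𝓑.filter (fun B => α ∈ B ∧ β ∈ B)).card = lam)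
    (hr : ∀ α : Ω, (𝓑.filter (fun B => α ∈ B)).card = r) (hlt : lam < r) :
    Fintype.card Ω ≤ 𝓑.card := by
  by_contra! hcard
  let N : (Ω → ℚ) →ₗ[ℚ] (𝓑 → ℚ) :=
    LinearMap.pi fun B => ∑ p ∈ B.1, LinearMap.proj p
  obtain ⟨w, hw, hw0⟩ := (Submodule.ne_bot_iff _).1
    (LinearMap.ker_ne_bot_of_finrank_lt (f := N) (by simpa using hcard))
  have hB : ∀ B ∈ 𝓑, ∑ p ∈ B, w p = 0 := fun B hB => by
    simpa [N] using congrFun (LinearMap.mem_ker.1 hw) ⟨B, hB⟩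
  have hpq : ∀ p q : Ω, ∑ B ∈ 𝓑, (if p ∈ B ∧ q ∈ B then (1 : ℚ) else 0) =
      lam + if p = q then (r : ℚ) - lam else 0 := fun p q => by
    rw [Finset.sum_boole]
    split_ifs with h
    · subst h
      simp [hr p]
    · simp [hpairs p q h]
  have key : ∑ B ∈ 𝓑, (∑ p ∈ B, w p) ^ 2 =
      lam * (∑ p, w p) ^ 2 + (r - lam) * ∑ p, w p ^ 2 := by
    calc ∑ B ∈ 𝓑, (∑ p ∈ B, w p) ^ 2
        = ∑ B ∈ 𝓑, ∑ p, ∑ q, w p * w q * (if p ∈ B ∧ q ∈ B then 1 else 0) := by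
          refine Finset.sum_congr rfl fun B _ => ?_
          have : ∑ p ∈ B, w p = ∑ p, if p ∈ B then w p else 0 := by simp
          rw [this, sq, Finset.sum_mul_sum]
          refine Finset.sum_congr rfl fun p _ => Finset.sum_congr rfl fun q _ => ?_
          by_cases hp : p ∈ B <;> by_cases hq : q ∈ B <;> simp [hp, hq]
      _ = ∑ p, ∑ q, w p * w q * (lam + if p = q then (r : ℚ) - lam else 0) := by
          rw [Finset.sum_comm]
          refine Finset.sum_congr rfl fun p _ => ?_
          rw [Finset.sum_comm]
          refine Finset.sum_congr rfl fun q _ => ?_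
          rw [← Finset.mul_sum, hpq]
      _ = lam * (∑ p, w p) ^ 2 + (r - lam) * ∑ p, w p ^ 2 := by
          simp only [mul_add, Finset.sum_add_distrib, mul_ite, mul_zero, Finset.sum_ite_eq,
            Finset.mem_univ, if_true]
          rw [sq (∑ p, w p), Finset.sum_mul_sum, Finset.mul_sum, Finset.mul_sum]
          congr 1
          · refine Finset.sum_congr rfl fun p _ => ?_
            rw [Finset.mul_sum]
            exact Finset.sum_congr rfl fun q _ => by ring
          · exact Finset.sum_congr rfl fun p _ => by ring
  rw [Finset.sum_eq_zero fun B h => by rw [hB B h]; norm_num] at key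
  obtain ⟨p, hp⟩ := Function.ne_iff.1 hw0
  have hsq : 0 < ∑ p, w p ^ 2 :=
    Finset.sum_pos' (fun _ _ => sq_nonneg _) ⟨p, Finset.mem_univ p, by
      have : w p ≠ 0 := hp
      positivity⟩
  have hlt' : (0 : ℚ) < r - lam := sub_pos.2 (by exact_mod_cast hlt)
  have hnonneg : (0 : ℚ) ≤ lam * (∑ p, w p) ^ 2 := by positivity
  linarith [mul_pos hlt' hsq]

/-- The number of points of a set partitioned into classes of size `c`. -/
theorem card_eq_card_partition_mul {Ω : Type*} [Fintype Ω] [DecidableEq Ω] {c : ℕ}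
    {𝓒 : Finset (Finset Ω)} (hpart : ∀ ω : Ω, ∃! Δ, Δ ∈ 𝓒 ∧ ω ∈ Δ)
    (hccard : ∀ Δ ∈ 𝓒, Δ.card = c) : Fintype.card Ω = 𝓒.card * c := by
  have h := Finset.sum_card_bipartiteAbove_eq_sum_card_bipartiteBelow
    (s := 𝓒) (t := Finset.univ) (fun Δ ω => ω ∈ Δ)
  rw [Finset.sum_const_nat (m := c), Finset.sum_const_nat (m := 1)] at h
  · simpa using h.symm
  · intro ω _
    obtain ⟨Δ, hΔ, huniq⟩ := hpart ω
    refine Finset.card_eq_one.2 ⟨Δ, ?_⟩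
    ext Δ'
    simp only [Finset.bipartiteBelow, Finset.mem_filter, Finset.mem_singleton]
    exact ⟨fun h => huniq Δ' h, fun h => h ▸ hΔ⟩
  · intro Δ hΔ
    simp [Finset.bipartiteAbove, hccard Δ hΔ]

theorem stmt_3
    {Ω : Type*} [Fintype Ω] [DecidableEq Ω]
    (v k lam c d ℓ : ℕ)
    (𝓑 𝓒 : Finset (Finset Ω))
    (G : Subgroup (Equiv.Perm Ω))
    (hv : Fintype.card Ω = v)
    (hlam1 : 1 ≤ lam)
    (hkcard : ∀ B ∈ 𝓑, B.card = k)
    (hpairs : ∀ α β : Ω, α ≠ β → (𝓑.filter (fun B => α ∈ B ∧ β ∈ B)).card = lam)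
    (hk2 : 2 < k) (hkv : k < v)
    (hGB : ∀ g ∈ G, ∀ B ∈ 𝓑, B.image ⇑g ∈ 𝓑)
    (hflag : ∀ B₁ ∈ 𝓑, ∀ B₂ ∈ 𝓑, ∀ α₁ ∈ B₁, ∀ α₂ ∈ B₂,
        ∃ g ∈ G, B₁.image ⇑g = B₂ ∧ g α₁ = α₂)
    (hpart : ∀ ω : Ω, ∃! Δ, Δ ∈ 𝓒 ∧ ω ∈ Δ)
    (hdcard : 𝓒.card = d) (hd2 : 2 ≤ d)
    (hccard : ∀ Δ ∈ 𝓒, Δ.card = c) (hc2 : 2 ≤ c)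
    (hGC : ∀ g ∈ G, ∀ Δ ∈ 𝓒, Δ.image ⇑g ∈ 𝓒)
    (hl2 : 2 ≤ ℓ)
    (hlcap : ∀ B ∈ 𝓑, ∀ Δ ∈ 𝓒, (B ∩ Δ).Nonempty → (B ∩ Δ).card = ℓ)
    : 1 ≤ k - 1 - d * (ℓ - 1) ∧
      ℓ - 1 ≤ (k - 1 - d * (ℓ - 1)) * (ℓ - 1) ∧
      (k - 1 - d * (ℓ - 1)) * (ℓ - 1) ≤ lam - 1 := by
  have hvcd : v = d * c := by rw [← hv, ← hdcard, card_eq_card_partition_mul hpart hccard]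
  have hpoint : ∀ α : Ω, (𝓑.filter (fun B => α ∈ B)).card * (k - 1) = (v - 1) * lam :=
    fun α => by
      rw [← hv, ← Finset.card_univ]
      exact card_blocks_through_mul hpairs (Finset.mem_univ α)
        fun B hB _ => by rw [Finset.inter_univ, hkcard B hB]
  obtain ⟨α⟩ : Nonempty Ω := Fintype.card_pos_iff.1 (by omega)
  obtain ⟨Δ, ⟨hΔ, hαΔ⟩, -⟩ := hpart α
  have hclass := card_blocks_through_mul hpairs hαΔ fun B hB hαB =>
    hlcap B hB Δ hΔ ⟨α, Finset.mem_inter.2 ⟨hαB, hαΔ⟩⟩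
  rw [hccard Δ hΔ] at hclass
  have hα := hpoint α
  set r := (𝓑.filter (fun B => α ∈ B)).card
  have hconst : ∀ β : Ω, (𝓑.filter (fun B => β ∈ B)).card = r := fun β =>
    Nat.eq_of_mul_eq_mul_right (by omega : 0 < k - 1) ((hpoint β).trans hα.symm)
  have hlt : lam < r := by
    have : lam * (k - 1) < r * (k - 1) := by
      rw [hα, mul_comm (v - 1)]
      exact Nat.mul_lt_mul_of_pos_left (by omega) hlam1
    exact lt_of_mul_lt_mul_right this (Nat.zero_le _)
  have hfisher := card_points_le_card_blocks hpairs hconst hlt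
  have hflags : 𝓑.card * k = v * r := by
    have h := Finset.sum_card_bipartiteAbove_eq_sum_card_bipartiteBelow
      (s := 𝓑) (t := Finset.univ) (fun B (β : Ω) => β ∈ B)
    rw [Finset.sum_const_nat (m := k), Finset.sum_const_nat (m := r), Finset.card_univ, hv] at h
    · exact h
    · exact fun β _ => hconst β
    · exact fun B hB => by simp [Finset.bipartiteAbove, hkcard B hB]
  have hkr : k ≤ r := by
    rw [hv] at hfisher
    refine le_of_mul_le_mul_left (a := v) ?_ (by omega)
    rw [← hflags]
    exact Nat.mul_le_mul_right k hfisher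
  clear_value r
  obtain ⟨L, rfl⟩ : ∃ L, ℓ = L + 1 := ⟨ℓ - 1, by omega⟩
  obtain ⟨C, rfl⟩ : ∃ C, c = C + 1 := ⟨c - 1, by omega⟩
  obtain ⟨D, rfl⟩ : ∃ D, d = D + 1 := ⟨d - 1, by omega⟩
  obtain ⟨K, rfl⟩ : ∃ K, k = K + 1 := ⟨k - 1, by omega⟩
  have hv1 : v - 1 = C * D + C + D := by
    rw [hvcd]
    exact Nat.sub_eq_of_eq_add (by ring)
  simp only [Nat.add_sub_cancel] at hclass hα ⊢
  rw [hv1] at hα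
  have hKC : C * K = L * (C * D + C + D) := by
    refine Nat.eq_of_mul_eq_mul_left (hlam1 : 0 < lam) ?_
    calc lam * (C * K) = (C * lam) * K := by ring
      _ = L * (r * K) := by rw [← hclass]; ring
      _ = lam * (L * (C * D + C + D)) := by rw [hα]; ring
  have hL : 0 < L := by omega
  have hC : 0 < C := by omega
  have hLD : 0 < L * D := Nat.mul_pos hL (by omega)
  have hK : (D + 1) * L < K := by
    refine lt_of_mul_lt_mul_left (a := C) ?_ (Nat.zero_le _)
    rw [hKC]
    linarith
  obtain ⟨x, rfl⟩ : ∃ x, K = (D + 1) * L + x := ⟨K - (D + 1) * L, by omega⟩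
  have hCx : C * x = L * D := by linarith
  rw [Nat.add_sub_cancel_left]
  have hx : 1 ≤ x := by omega
  refine ⟨hx, Nat.le_mul_of_pos_left L hx, Nat.le_sub_one_of_lt ?_⟩
  refine lt_of_mul_lt_mul_left (a := C) ?_ (Nat.zero_le _)
  rw [← hclass, ← mul_assoc]
  refine Nat.mul_lt_mul_of_pos_right ?_ hL
  linarith
end

section
/- Assume Hypothesis (H). Then k divides λ·ℓ·(ℓ−1)²·d·(d−1). -/
/-- Double counting of pairs `(α, β)` with `β ∈ R α` lying in a common block, when any two distinct
points lie in exactly `lam` blocks. -/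
theorem sum_card_inter_eq_mul_of_pairs {Ω : Type*} [Fintype Ω] [DecidableEq Ω] {lam : ℕ}
    (𝓑 : Finset (Finset Ω))
    (hpairs : ∀ α β : Ω, α ≠ β → (𝓑.filter (fun B => α ∈ B ∧ β ∈ B)).card = lam)
    (R : Ω → Finset Ω) (hR : ∀ α, α ∉ R α) :
    ∑ B ∈ 𝓑, ∑ α ∈ B, (B ∩ R α).card = (∑ α, (R α).card) * lam := by
  have hpoint : ∀ α, ∑ B ∈ 𝓑 with α ∈ B, (B ∩ R α).card = (R α).card * lam := by
    intro α
    have h := Finset.sum_card_bipartiteAbove_eq_sum_card_bipartiteBelow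
      (s := 𝓑.filter (α ∈ ·)) (t := R α) (fun B β => β ∈ B)
    rw [Finset.sum_congr rfl (s₁ := R α) (g := fun _ => lam), Finset.sum_const, smul_eq_mul] at h
    · rw [← h]
      refine Finset.sum_congr rfl fun B _ => ?_
      congr 1
      ext β
      simp [Finset.bipartiteAbove, and_comm]
    · intro β hβ
      rw [Finset.bipartiteBelow, Finset.filter_filter]
      exact hpairs α β fun h => hR α (h ▸ hβ)
  rw [Finset.sum_mul, ← Finset.sum_congr rfl fun α _ => hpoint α]
  exact Finset.sum_comm' (by simp [and_comm])

/-- The arithmetic consequence of counting all pairs of points in blocks, and those within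
a class of the partition. -/
theorem dvd_of_pair_counts {b k lam c d ℓ : ℕ} (hk : 1 ≤ k) (hv : 2 ≤ c * d) (hc : 2 ≤ c)
    (hd : 1 ≤ d) (hl : 2 ≤ ℓ) (hlam : 1 ≤ lam)
    (hall : b * (k * (k - 1)) = c * d * (c * d - 1) * lam)
    (hclass : b * (k * (ℓ - 1)) = c * d * (c - 1) * lam) :
    k ∣ lam * ℓ * (ℓ - 1) * d * (d - 1) := by
  have hbk : b * k ≠ 0 := by
    intro h
    have h0 : b * (k * (k - 1)) = 0 := by rw [← mul_assoc, h, zero_mul]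
    have hpos : 0 < c * d * (c * d - 1) * lam :=
      Nat.mul_pos (Nat.mul_pos (by omega) (by omega)) (by omega)
    omega
  zify [hk, show 1 ≤ c * d by omega, show 1 ≤ c by omega, show 1 ≤ ℓ by omega, hd]
    at hall hclass hbk ⊢
  have hcancel : ((c : ℤ) - 1) * (k - 1) = (ℓ - 1) * (c * d - 1) := by
    refine mul_left_cancel₀ hbk ?_
    linear_combination ((c : ℤ) - 1) * hall - (c * d - 1) * hclass
  obtain ⟨x, hx⟩ : ∃ x : ℤ, x = k - 1 - d * (ℓ - 1) := ⟨_, rfl⟩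
  have hxc1 : x * (c - 1) = ((ℓ : ℤ) - 1) * (d - 1) := by
    rw [hx]
    linear_combination hcancel
  have hxc : x * c = (k : ℤ) - ℓ := by
    linear_combination hxc1 + hx
  refine ⟨lam * (ℓ - 1) * d * (d - 1) - x ^ 2 * b * (ℓ - 1), ?_⟩
  linear_combination x ^ 2 * hclass + lam * d * x * (c - 1) * hxc + lam * d * (k - ℓ) * hxc1

theorem stmt_5
    {Ω : Type*} [Fintype Ω] [DecidableEq Ω]
    (v k lam c d ℓ : ℕ)
    (𝓑 𝓒 : Finset (Finset Ω))
    (G : Subgroup (Equiv.Perm Ω))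
    (hv : Fintype.card Ω = v)
    (hlam1 : 1 ≤ lam)
    (hkcard : ∀ B ∈ 𝓑, B.card = k)
    (hpairs : ∀ α β : Ω, α ≠ β → (𝓑.filter (fun B => α ∈ B ∧ β ∈ B)).card = lam)
    (hk2 : 2 < k) (hkv : k < v)
    (hGB : ∀ g ∈ G, ∀ B ∈ 𝓑, B.image ⇑g ∈ 𝓑)
    (hflag : ∀ B₁ ∈ 𝓑, ∀ B₂ ∈ 𝓑, ∀ α₁ ∈ B₁, ∀ α₂ ∈ B₂,
        ∃ g ∈ G, B₁.image ⇑g = B₂ ∧ g α₁ = α₂)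
    (hpart : ∀ ω : Ω, ∃! Δ, Δ ∈ 𝓒 ∧ ω ∈ Δ)
    (hdcard : 𝓒.card = d) (hd2 : 2 ≤ d)
    (hccard : ∀ Δ ∈ 𝓒, Δ.card = c) (hc2 : 2 ≤ c)
    (hGC : ∀ g ∈ G, ∀ Δ ∈ 𝓒, Δ.image ⇑g ∈ 𝓒)
    (hl2 : 2 ≤ ℓ)
    (hlcap : ∀ B ∈ 𝓑, ∀ Δ ∈ 𝓒, (B ∩ Δ).Nonempty → (B ∩ Δ).card = ℓ)
    : k ∣ lam * ℓ * (ℓ - 1) ^ 2 * d * (d - 1) := by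
  classical
  choose cl hcl hclu using hpart
  have hclC : ∀ α, cl α ∈ 𝓒 := fun α => (hcl α).1
  have hmem : ∀ α, α ∈ cl α := fun α => (hcl α).2
  have hvcd : v = c * d := by
    rw [← hv, ← Finset.card_univ,
      Finset.card_eq_sum_card_fiberwise (f := cl) (t := 𝓒) (fun α _ => hclC α),
      Finset.sum_congr rfl (g := fun _ => c), Finset.sum_const, hdcard, smul_eq_mul, mul_comm]
    intro Δ hΔ
    rw [← hccard Δ hΔ]
    congr 1
    ext α
    simp only [Finset.mem_filter, Finset.mem_univ, true_and]
    exact ⟨fun h => h ▸ hmem α, fun h => (hclu α Δ ⟨hΔ, h⟩).symm⟩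
  have hall : 𝓑.card * (k * (k - 1)) = v * (v - 1) * lam := by
    have h := sum_card_inter_eq_mul_of_pairs 𝓑 hpairs (fun α => Finset.univ.erase α) (by simp)
    rw [Finset.sum_congr rfl (g := fun _ => k * (k - 1))] at h
    · simpa [hv, Finset.card_erase_of_mem] using h
    · intro B hB
      rw [Finset.sum_congr rfl (g := fun _ => k - 1)]
      · simp [hkcard B hB]
      · intro α hα
        rw [Finset.inter_erase, Finset.inter_univ, Finset.card_erase_of_mem hα, hkcard B hB]
  have hclass : 𝓑.card * (k * (ℓ - 1)) = v * (c - 1) * lam := by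
    have h := sum_card_inter_eq_mul_of_pairs 𝓑 hpairs (fun α => (cl α).erase α) (by simp)
    rw [Finset.sum_congr rfl (g := fun _ => k * (ℓ - 1))] at h
    · simpa [hv, Finset.card_erase_of_mem, hmem, hccard _ (hclC _)] using h
    · intro B hB
      rw [Finset.sum_congr rfl (g := fun _ => ℓ - 1)]
      · simp [hkcard B hB]
      · intro α hα
        have hα' : α ∈ B ∩ cl α := Finset.mem_inter.2 ⟨hα, hmem α⟩
        rw [Finset.inter_erase, Finset.card_erase_of_mem hα', hlcap B hB _ (hclC α) ⟨α, hα'⟩]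
  have hdvd := dvd_of_pair_counts (by omega) (by omega) (by omega) (by omega) hl2 hlam1
    (hvcd ▸ hall) (hvcd ▸ hclass)
  exact hdvd.trans ⟨ℓ - 1, by ring⟩
end

section
/- Assume Hypothesis (H), and suppose p is a prime such that 0 ≤ d − p < k/ℓ < p and p does not divide the number of blocks b = vr/k. Then p does not divide the order of the permutation group D = G^C induced by G on the class partition C. -/
open scoped Pointwise

/-- A `p`-group leaving invariant a finite set of size prime to `p` fixes one of its elements. -/
theorem IsPGroup.exists_mem_fixed_of_not_dvd_card {p : ℕ} [Fact p.Prime] {P α : Type*} [Group P]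
    [MulAction P α] (hP : IsPGroup p P) (s : Finset α) (hs : ∀ g : P, ∀ x ∈ s, g • x ∈ s)
    (hcard : ¬ p ∣ s.card) : ∃ x ∈ s, ∀ g : P, g • x = x := by
  let S : SubMulAction P α := ⟨(s : Set α), fun g x hx => hs g x hx⟩
  have hS : ¬ p ∣ Nat.card S := by
    have h : Nat.card S = s.card := (Nat.card_coe_set_eq (s : Set α)).trans (Set.ncard_coe_finset s)
    rwa [h]
  have : Finite S := s.finite_toSet
  obtain ⟨x, hx⟩ := hP.nonempty_fixed_point_of_prime_not_dvd_card S hS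
  exact ⟨x, x.2, fun g => congrArg Subtype.val (hx g)⟩

/-- A `p`-group leaving invariant a finite set of size less than `p` fixes all its elements. -/
theorem IsPGroup.smul_eq_of_card_lt {p : ℕ} [Fact p.Prime] {P α : Type*} [Group P]
    [MulAction P α] (hP : IsPGroup p P) (s : Finset α) (hs : ∀ g : P, ∀ x ∈ s, g • x ∈ s)
    (hcard : s.card < p) {x : α} (hx : x ∈ s) (g : P) : g • x = x := by
  have hsub : MulAction.orbit P x ⊆ (s : Set α) := by
    rintro _ ⟨h, rfl⟩
    exact hs h x hx
  have : Finite (MulAction.orbit P x) := s.finite_toSet.subset hsub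
  obtain ⟨n, hn⟩ := hP.card_orbit x
  have hle : Nat.card (MulAction.orbit P x) ≤ s.card := by
    rw [Nat.card_coe_set_eq, ← Set.ncard_coe_finset s]
    exact Set.ncard_le_ncard hsub s.finite_toSet
  have hn0 : n = 0 := by
    by_contra hne
    have := Nat.le_self_pow hne p
    omega
  rw [hn0, pow_zero, Nat.card_eq_one_iff_unique] at hn
  have := hn.1
  exact congrArg Subtype.val
    (Subsingleton.elim (⟨g • x, MulAction.mem_orbit x g⟩ : MulAction.orbit P x)
      ⟨x, MulAction.mem_orbit_self x⟩)

/-- If a set `B` meets each class of a partition in `0` or `ℓ` points, then it meets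
`B.card / ℓ` classes. -/
theorem card_filter_inter_nonempty_eq_div {Ω : Type*} [DecidableEq Ω] {𝓒 : Finset (Finset Ω)}
    (hpart : ∀ ω : Ω, ∃! Δ, Δ ∈ 𝓒 ∧ ω ∈ Δ) {B : Finset Ω} {ℓ : ℕ} (hl : 0 < ℓ)
    (hcap : ∀ Δ ∈ 𝓒, (B ∩ Δ).Nonempty → (B ∩ Δ).card = ℓ) :
    (𝓒.filter fun Δ => (B ∩ Δ).Nonempty).card = B.card / ℓ := by
  have hB : B = (𝓒.filter fun Δ => (B ∩ Δ).Nonempty).biUnion (B ∩ ·) := by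
    ext x
    simp only [Finset.mem_biUnion, Finset.mem_filter, Finset.mem_inter]
    refine ⟨fun hx => ?_, fun ⟨_, _, hx, _⟩ => hx⟩
    obtain ⟨Δ, ⟨hΔ, hxΔ⟩, -⟩ := hpart x
    exact ⟨Δ, ⟨hΔ, x, Finset.mem_inter.2 ⟨hx, hxΔ⟩⟩, hx, hxΔ⟩
  have hcard : B.card = (𝓒.filter fun Δ => (B ∩ Δ).Nonempty).card * ℓ := by
    conv_lhs => rw [hB]
    rw [Finset.card_biUnion, Finset.sum_const_nat]
    · intro Δ hΔ
      rw [Finset.mem_filter] at hΔ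
      exact hcap Δ hΔ.1 hΔ.2
    · intro Δ hΔ Δ' hΔ' hne
      rw [Finset.mem_coe, Finset.mem_filter] at *
      refine Finset.disjoint_left.2 fun x hx hx' => hne ?_
      exact (hpart x).unique ⟨hΔ.1, (Finset.mem_inter.1 hx).2⟩
        ⟨hΔ'.1, (Finset.mem_inter.1 hx').2⟩
  rw [hcard, Nat.mul_div_cancel _ hl]


theorem stmt_6
    {Ω : Type*} [Fintype Ω] [DecidableEq Ω]
    (v k lam c d ℓ : ℕ)
    (𝓑 𝓒 : Finset (Finset Ω))
    (G : Subgroup (Equiv.Perm Ω))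
    (hv : Fintype.card Ω = v)
    (hlam1 : 1 ≤ lam)
    (hkcard : ∀ B ∈ 𝓑, B.card = k)
    (hpairs : ∀ α β : Ω, α ≠ β → (𝓑.filter (fun B => α ∈ B ∧ β ∈ B)).card = lam)
    (hk2 : 2 < k) (hkv : k < v)
    (hGB : ∀ g ∈ G, ∀ B ∈ 𝓑, B.image ⇑g ∈ 𝓑)
    (hflag : ∀ B₁ ∈ 𝓑, ∀ B₂ ∈ 𝓑, ∀ α₁ ∈ B₁, ∀ α₂ ∈ B₂,
        ∃ g ∈ G, B₁.image ⇑g = B₂ ∧ g α₁ = α₂)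
    (hpart : ∀ ω : Ω, ∃! Δ, Δ ∈ 𝓒 ∧ ω ∈ Δ)
    (hdcard : 𝓒.card = d) (hd2 : 2 ≤ d)
    (hccard : ∀ Δ ∈ 𝓒, Δ.card = c) (hc2 : 2 ≤ c)
    (hGC : ∀ g ∈ G, ∀ Δ ∈ 𝓒, Δ.image ⇑g ∈ 𝓒)
    (hl2 : 2 ≤ ℓ)
    (hlcap : ∀ B ∈ 𝓑, ∀ Δ ∈ 𝓒, (B ∩ Δ).Nonempty → (B ∩ Δ).card = ℓ)
    (p : ℕ) (hp : p.Prime)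
    (hpd : p ≤ d) (hdp : d - p < k / ℓ) (hkp : k / ℓ < p)
    (hpb : ¬ p ∣ 𝓑.card)
    (K : Subgroup ↥G)
    (hK : ∀ g : ↥G, g ∈ K ↔ ∀ Δ ∈ 𝓒, Δ.image ⇑(g : Equiv.Perm Ω) = Δ)
    : ¬ p ∣ K.index := by

  have : Fact p.Prime := ⟨hp⟩
  obtain ⟨P⟩ : Nonempty (Sylow p G) := inferInstance
  suffices hPK : (P : Subgroup G) ≤ K from
    fun h => P.not_dvd_index (h.trans (Subgroup.index_dvd_of_le hPK))
  have hPG : IsPGroup p P := P.isPGroup'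
  obtain ⟨B, hB, hfix⟩ := hPG.exists_mem_fixed_of_not_dvd_card 𝓑
    (fun g B hB => hGB _ g.1.2 B hB) hpb
  have hinv : ∀ g : P, ∀ Δ ∈ 𝓒, g • Δ ∈ 𝓒 := fun g Δ hΔ => hGC _ g.1.2 Δ hΔ
  have hmeet : ∀ (g : P) (Δ : Finset Ω), (B ∩ g • Δ).Nonempty ↔ (B ∩ Δ).Nonempty := by
    intro g Δ
    conv_lhs => rw [← hfix g, ← Finset.smul_finset_inter, Finset.smul_finset_nonempty]
  have hcard := card_filter_inter_nonempty_eq_div hpart (by omega) (hlcap B hB)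
  rw [hkcard B hB] at hcard
  have hsum := Finset.card_filter_add_card_filter_not (s := 𝓒) fun Δ => (B ∩ Δ).Nonempty
  intro g hg
  rw [hK]
  intro Δ hΔ
  change (⟨g, hg⟩ : P) • Δ = Δ
  by_cases hΔB : (B ∩ Δ).Nonempty
  · refine hPG.smul_eq_of_card_lt (𝓒.filter fun Δ => (B ∩ Δ).Nonempty) (fun h Θ hΘ => ?_)
      (by omega) (Finset.mem_filter.2 ⟨hΔ, hΔB⟩) _
    rw [Finset.mem_filter] at hΘ ⊢
    exact ⟨hinv h Θ hΘ.1, (hmeet h Θ).2 hΘ.2⟩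
  · refine hPG.smul_eq_of_card_lt (𝓒.filter fun Δ => ¬ (B ∩ Δ).Nonempty) (fun h Θ hΘ => ?_)
      (by omega) (Finset.mem_filter.2 ⟨hΔ, hΔB⟩) _
    rw [Finset.mem_filter] at hΘ ⊢
    exact ⟨hinv h Θ hΘ.1, fun hn => hΘ.2 ((hmeet h Θ).1 hn)⟩
end

section
/- Assume Hypothesis (H). Let B ∈ B, let X = (G_B)^C be the subgroup of D = G^C induced on C by the setwise stabilizer G_B of B, let c₀ be the common length of the orbits of the kernel K on P, and set x = c₀/gcd(c₀, ℓ). If c₀ > 1, then c₀ divides c, x divides b, and the index |D : X| divides b/x. -/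
open scoped Pointwise

/-- If all orbits have length `n`, the sum of an invariant function is divisible by `n`. -/
theorem dvd_sum_of_ncard_orbit_eq {H α : Type*} [Group H] [MulAction H α] [Fintype α] {n : ℕ}
    (hn : ∀ a : α, (MulAction.orbit H a).ncard = n) (f : α → ℕ)
    (hf : ∀ (h : H) (a : α), f (h • a) = f a) : n ∣ ∑ a, f a := by
  classical
  rw [← Finset.sum_fiberwise Finset.univ
    (Quotient.mk (MulAction.orbitRel H α)) f]
  refine Finset.dvd_sum fun q _ => ?_
  induction q using Quotient.inductionOn with
  | h a =>
    have hmem : ∀ b, b ∈ Finset.univ.filter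
        (fun b => Quotient.mk (MulAction.orbitRel H α) b = Quotient.mk _ a) ↔
        b ∈ MulAction.orbit H a := by
      intro b
      simp only [Finset.mem_filter, Finset.mem_univ, true_and]
      exact Quotient.eq
    rw [Finset.sum_congr rfl (g := fun _ => f a), Finset.sum_const, smul_eq_mul]
    · refine Dvd.intro _ (congrArg (· * f a) ?_)
      rw [← hn a, ← Set.ncard_coe_finset]
      congr 1
      ext b
      rw [Finset.mem_coe, hmem]
    · intro b hb
      obtain ⟨h, rfl⟩ := (hmem b).1 hb
      exact hf h a

/-- Double counting of incidences between an invariant set `S` of points and the orbit of a set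
`B` of points. -/
theorem dvd_ncard_orbit_mul_card_inter {H α : Type*} [Group H] [MulAction H α] [Fintype α]
    [DecidableEq α] {n : ℕ} (hn : ∀ a : α, (MulAction.orbit H a).ncard = n) (B S : Finset α)
    (hS : ∀ h : H, h • S = S) : n ∣ (MulAction.orbit H B).ncard * (B ∩ S).card := by
  classical
  set O : Finset (Finset α) := (MulAction.orbit H B).toFinset with hO
  have hOmem : ∀ X, X ∈ O ↔ X ∈ MulAction.orbit H B := fun X => by simp [hO]
  have hcard : (MulAction.orbit H B).ncard = O.card := Set.ncard_eq_toFinset_card' _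
  have hsum : (MulAction.orbit H B).ncard * (B ∩ S).card =
      ∑ a, (O.filter fun X => a ∈ X ∩ S).card := by
    simp_rw [Finset.card_filter]
    rw [Finset.sum_comm, hcard, ← smul_eq_mul, ← Finset.sum_const]
    refine Finset.sum_congr rfl fun X hX => ?_
    obtain ⟨h, rfl⟩ := (hOmem X).1 hX
    rw [← Finset.card_filter, Finset.filter_mem_eq_inter, Finset.univ_inter]
    change _ = (h • B ∩ S).card
    nth_rewrite 2 [← hS h]
    rw [← Finset.smul_finset_inter, Finset.card_smul_finset]
  rw [hsum]
  refine dvd_sum_of_ncard_orbit_eq hn _ fun h a => ?_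
  symm
  refine Finset.card_bij (fun X _ => h • X) ?_ ?_ ?_
  · intro X hX
    rw [Finset.mem_filter, hOmem] at hX ⊢
    refine ⟨MulAction.mem_orbit_of_mem_orbit h hX.1, ?_⟩
    rw [← hS h, ← Finset.smul_finset_inter]
    exact Finset.smul_mem_smul_finset hX.2
  · intro X _ Y _ hXY
    exact smul_left_cancel h hXY
  · intro Y hY
    rw [Finset.mem_filter, hOmem] at hY
    refine ⟨h⁻¹ • Y, ?_, smul_inv_smul h Y⟩
    rw [Finset.mem_filter, hOmem]
    refine ⟨MulAction.mem_orbit_of_mem_orbit h⁻¹ hY.1, ?_⟩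
    rw [← hS h⁻¹, ← Finset.smul_finset_inter, Finset.mem_inv_smul_finset_iff]
    exact hY.2

/-- If `J` contains the stabilizer of `b`, the orbit length of `b` is the product of its
`J`-orbit length and the index of `J`. -/
theorem ncard_orbit_mul_index {G β : Type*} [Group G] [MulAction G β] (J : Subgroup G) (b : β)
    (hJ : MulAction.stabilizer G b ≤ J) :
    (MulAction.orbit J b).ncard * J.index = (MulAction.orbit G b).ncard := by
  rw [← MulAction.index_stabilizer, ← MulAction.index_stabilizer, ← Subgroup.relIndex_mul_index hJ]
  rfl

theorem stmt_8
    {Ω : Type*} [Fintype Ω] [DecidableEq Ω]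
    (v k lam c d ℓ : ℕ)
    (𝓑 𝓒 : Finset (Finset Ω))
    (G : Subgroup (Equiv.Perm Ω))
    (hv : Fintype.card Ω = v)
    (hlam1 : 1 ≤ lam)
    (hkcard : ∀ B ∈ 𝓑, B.card = k)
    (hpairs : ∀ α β : Ω, α ≠ β → (𝓑.filter (fun B => α ∈ B ∧ β ∈ B)).card = lam)
    (hk2 : 2 < k) (hkv : k < v)
    (hGB : ∀ g ∈ G, ∀ B ∈ 𝓑, B.image ⇑g ∈ 𝓑)
    (hflag : ∀ B₁ ∈ 𝓑, ∀ B₂ ∈ 𝓑, ∀ α₁ ∈ B₁, ∀ α₂ ∈ B₂,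
        ∃ g ∈ G, B₁.image ⇑g = B₂ ∧ g α₁ = α₂)
    (hpart : ∀ ω : Ω, ∃! Δ, Δ ∈ 𝓒 ∧ ω ∈ Δ)
    (hdcard : 𝓒.card = d) (hd2 : 2 ≤ d)
    (hccard : ∀ Δ ∈ 𝓒, Δ.card = c) (hc2 : 2 ≤ c)
    (hGC : ∀ g ∈ G, ∀ Δ ∈ 𝓒, Δ.image ⇑g ∈ 𝓒)
    (hl2 : 2 ≤ ℓ)
    (hlcap : ∀ B ∈ 𝓑, ∀ Δ ∈ 𝓒, (B ∩ Δ).Nonempty → (B ∩ Δ).card = ℓ)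
    (B : Finset Ω) (hB : B ∈ 𝓑)
    -- K is the kernel of the action of G on 𝓒
    (K : Subgroup ↥G)
    (hK : ∀ g : ↥G, g ∈ K ↔ ∀ Δ ∈ 𝓒, Δ.image ⇑(g : Equiv.Perm Ω) = Δ)
    -- J = G_B · K, so that |D : X| = |G : G_B K| = J.index
    (J : Subgroup ↥G)
    (hJ : ∀ g : ↥G, g ∈ J ↔ ∃ x ∈ K, B.image ⇑((g * x⁻¹ : ↥G) : Equiv.Perm Ω) = B)
    -- c₀ is the common length of the K-orbits on the point set
    (c₀ x₀ : ℕ)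
    (hc₀ : ∀ ω : Ω, Set.ncard {ω' : Ω | ∃ g ∈ K, (g : Equiv.Perm Ω) ω = ω'} = c₀)
    (hx₀ : x₀ = c₀ / Nat.gcd c₀ ℓ)
    (hc₀1 : 1 < c₀)
    : c₀ ∣ c ∧ x₀ ∣ 𝓑.card ∧ J.index ∣ 𝓑.card / x₀ := by
  obtain ⟨β, hβ⟩ : B.Nonempty := by
    rw [← Finset.card_pos, hkcard B hB]
    omega
  obtain ⟨Δ, ⟨hΔ, hβΔ⟩, -⟩ := hpart β
  have horbit : ∀ ω : Ω, (MulAction.orbit K ω).ncard = c₀ := by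
    intro ω
    rw [← hc₀ ω]
    congr 1
    ext ω'
    constructor
    · rintro ⟨g, rfl⟩
      exact ⟨g, g.2, rfl⟩
    · rintro ⟨g, hg, rfl⟩
      exact ⟨⟨g, hg⟩, rfl⟩
  have hKΔ : ∀ g : K, g • Δ = Δ := fun g => (hK g).1 g.2 Δ hΔ
  have hcdvd : c₀ ∣ c := by
    have h := dvd_ncard_orbit_mul_card_inter horbit Δ Δ hKΔ
    have hfix : MulAction.orbit K Δ = {Δ} := by
      ext X
      simp [MulAction.mem_orbit_iff, hKΔ, eq_comm]
    rwa [hfix, Set.ncard_singleton, one_mul, Finset.inter_self, hccard Δ hΔ] at h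
  have hblocks : MulAction.orbit G B = (𝓑 : Set (Finset Ω)) := by
    ext X
    constructor
    · rintro ⟨g, rfl⟩
      exact hGB g g.2 B hB
    · intro hX
      obtain ⟨ξ, hξ⟩ : X.Nonempty := by
        rw [← Finset.card_pos, hkcard X hX]
        omega
      obtain ⟨g, hg, hgB, -⟩ := hflag B hB X hX β hβ ξ hξ
      exact ⟨⟨g, hg⟩, hgB⟩
  have hstab : MulAction.stabilizer G B ≤ J := by
    intro g hg
    refine (hJ g).2 ⟨1, K.one_mem, ?_⟩
    rw [inv_one, mul_one]
    exact hg
  have hJorbit : MulAction.orbit J B = MulAction.orbit K B := by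
    ext X
    constructor
    · rintro ⟨g, rfl⟩
      obtain ⟨y, hy, hyB⟩ := (hJ _).1 (J.inv_mem g.2)
      have hyB' : ((g : G)⁻¹ * y⁻¹) • B = B := hyB
      refine ⟨⟨y⁻¹, K.inv_mem hy⟩, ?_⟩
      change y⁻¹ • B = (g : G) • B
      rwa [mul_smul, inv_smul_eq_iff] at hyB'
    · rintro ⟨g, rfl⟩
      refine ⟨⟨g, (hJ g).2 ⟨g, g.2, ?_⟩⟩, rfl⟩
      rw [mul_inv_cancel]
      exact Finset.image_id
  have hcount : (MulAction.orbit K B).ncard * J.index = 𝓑.card := by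
    rw [← hJorbit, ncard_orbit_mul_index J B hstab, hblocks, Set.ncard_coe_finset]
  have hxdvd : x₀ ∣ (MulAction.orbit K B).ncard := by
    have h := dvd_ncard_orbit_mul_card_inter horbit B Δ hKΔ
    rw [hlcap B hB Δ hΔ ⟨β, Finset.mem_inter.2 ⟨hβ, hβΔ⟩⟩] at h
    rw [hx₀]
    exact Nat.Coprime.dvd_of_dvd_mul_right
      (Nat.coprime_div_gcd_div_gcd (Nat.gcd_pos_of_pos_left ℓ (by omega)))
      (by
        rw [← Nat.mul_div_assoc _ (Nat.gcd_dvd_right c₀ ℓ)]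
        exact Nat.div_dvd_div (Nat.gcd_dvd_left c₀ ℓ) h)
  have hxpos : 0 < x₀ := by
    rw [hx₀]
    exact Nat.div_pos (Nat.gcd_le_left ℓ (by omega)) (Nat.gcd_pos_of_pos_left ℓ (by omega))
  obtain ⟨m, hm⟩ := hxdvd
  rw [hm, mul_assoc] at hcount
  refine ⟨hcdvd, ⟨_, hcount.symm⟩, ?_⟩
  rw [← hcount, Nat.mul_div_cancel_left _ hxpos]
  exact Dvd.intro_left m rfl
end

section
/- Assume Hypothesis (H) with ℓ = 2. Then for each class Δ ∈ C, the permutation group L = (G_Δ)^Δ induced on Δ by the setwise stabilizer G_Δ is 2-transitive on Δ (of degree c). -/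
theorem stmt_9
    {Ω : Type*} [Fintype Ω] [DecidableEq Ω]
    (v k lam c d ℓ : ℕ)
    (𝓑 𝓒 : Finset (Finset Ω))
    (G : Subgroup (Equiv.Perm Ω))
    (hv : Fintype.card Ω = v)
    (hlam1 : 1 ≤ lam)
    (hkcard : ∀ B ∈ 𝓑, B.card = k)
    (hpairs : ∀ α β : Ω, α ≠ β → (𝓑.filter (fun B => α ∈ B ∧ β ∈ B)).card = lam)
    (hk2 : 2 < k) (hkv : k < v)
    (hGB : ∀ g ∈ G, ∀ B ∈ 𝓑, B.image ⇑g ∈ 𝓑)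
    (hflag : ∀ B₁ ∈ 𝓑, ∀ B₂ ∈ 𝓑, ∀ α₁ ∈ B₁, ∀ α₂ ∈ B₂,
        ∃ g ∈ G, B₁.image ⇑g = B₂ ∧ g α₁ = α₂)
    (hpart : ∀ ω : Ω, ∃! Δ, Δ ∈ 𝓒 ∧ ω ∈ Δ)
    (hdcard : 𝓒.card = d) (hd2 : 2 ≤ d)
    (hccard : ∀ Δ ∈ 𝓒, Δ.card = c) (hc2 : 2 ≤ c)
    (hGC : ∀ g ∈ G, ∀ Δ ∈ 𝓒, Δ.image ⇑g ∈ 𝓒)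
    (hl2 : 2 ≤ ℓ)
    (hlcap : ∀ B ∈ 𝓑, ∀ Δ ∈ 𝓒, (B ∩ Δ).Nonempty → (B ∩ Δ).card = ℓ)
    (hl : ℓ = 2)
    : ∀ Δ ∈ 𝓒, ∀ α ∈ Δ, ∀ β ∈ Δ, ∀ α' ∈ Δ, ∀ β' ∈ Δ, α ≠ β → α' ≠ β' →
        ∃ g ∈ G, Δ.image ⇑g = Δ ∧ g α = α' ∧ g β = β' := by
  intro Δ hΔ α hα β hβ α' hα' β' hβ' hne hne'
  have exists_block : ∀ x y : Ω, x ≠ y → ∃ B ∈ 𝓑, x ∈ B ∧ y ∈ B := by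
    intro x y hxy
    have hpos : 0 < (𝓑.filter (fun B => x ∈ B ∧ y ∈ B)).card := by
      rw [hpairs x y hxy]
      exact hlam1
    obtain ⟨B, hB⟩ := Finset.card_pos.mp hpos
    exact ⟨B, (Finset.mem_filter.mp hB).1, (Finset.mem_filter.mp hB).2⟩
  obtain ⟨B, hB, hαB, hβB⟩ := exists_block α β hne
  obtain ⟨B', hB', hαB', hβB'⟩ := exists_block α' β' hne'
  obtain ⟨g, hg, hgB, hgα⟩ := hflag B hB B' hB' α hαB α' hαB'
  have hgΔ : Δ.image ⇑g = Δ :=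
    (hpart α').unique ⟨hGC g hg Δ hΔ, hgα ▸ Finset.mem_image_of_mem g hα⟩ ⟨hΔ, hα'⟩
  have hcard : (B' ∩ Δ).card = 2 :=
    (hlcap B' hB' Δ hΔ ⟨α', Finset.mem_inter.mpr ⟨hαB', hα'⟩⟩).trans hl
  have hpair : ({α', β'} : Finset Ω) = B' ∩ Δ := by
    refine Finset.eq_of_subset_of_card_le ?_ (by rw [hcard, Finset.card_pair hne'])
    simp [Finset.insert_subset_iff, hαB', hβB', hα', hβ']
  have hgβ : g β ∈ ({α', β'} : Finset Ω) := by
    rw [hpair, Finset.mem_inter]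
    exact ⟨hgB ▸ Finset.mem_image_of_mem g hβB, hgΔ ▸ Finset.mem_image_of_mem g hβ⟩
  rw [Finset.mem_insert, Finset.mem_singleton] at hgβ
  exact ⟨g, hg, hgΔ, hgα, hgβ.resolve_left fun h => hne (g.injective (hgα.trans h.symm))⟩
end

section
/- Assume Hypothesis (H) with ℓ ≥ 3, let Δ ∈ C and let α, β be distinct points of Δ. Then the setwise stabilizer L_{{α,β}} of {α,β} in L = (G_Δ)^Δ has an orbit in Δ \ {α,β} of size at most (ℓ−2)λ. In particular, if c > 2 + (ℓ−2)λ then L is not 3-transitive on Δ. -/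
open scoped Pointwise in
/-- The subgroup of `G` fixing both finsets `s` and `t` setwise. -/
def setwiseStabilizer {Ω : Type*} [DecidableEq Ω] (G : Subgroup (Equiv.Perm Ω))
    (s t : Finset Ω) : Subgroup (Equiv.Perm Ω) :=
  G ⊓ (MulAction.stabilizer (Equiv.Perm Ω) s ⊓ MulAction.stabilizer (Equiv.Perm Ω) t)

theorem mem_setwiseStabilizer {Ω : Type*} [DecidableEq Ω] {G : Subgroup (Equiv.Perm Ω)}
    {s t : Finset Ω} {g : Equiv.Perm Ω} :
    g ∈ setwiseStabilizer G s t ↔ g ∈ G ∧ s.image ⇑g = s ∧ t.image ⇑g = t :=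
  Iff.rfl

/-- A nonempty finset invariant under a permutation group contains an orbit of the group. -/
theorem exists_orbit_subset_of_invariant {Ω : Type*} [DecidableEq Ω]
    (H : Subgroup (Equiv.Perm Ω)) (S : Finset Ω) (hS : S.Nonempty)
    (hinv : ∀ g ∈ H, ∀ x ∈ S, g x ∈ S) :
    ∃ O ⊆ S, O.Nonempty ∧ (∀ g ∈ H, O.image ⇑g = O) ∧
      ∀ x ∈ O, ∀ y ∈ O, ∃ g ∈ H, g x = y := by
  classical
  obtain ⟨a, ha⟩ := hS
  have hmem : ∀ x, x ∈ S.filter (fun x => ∃ g ∈ H, g a = x) ↔ ∃ g ∈ H, g a = x := by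
    intro x
    rw [Finset.mem_filter, and_iff_right_iff_imp]
    rintro ⟨g, hg, rfl⟩
    exact hinv g hg a ha
  refine ⟨S.filter (fun x => ∃ g ∈ H, g a = x), Finset.filter_subset _ _,
    ⟨a, (hmem a).2 ⟨1, H.one_mem, rfl⟩⟩, ?_, ?_⟩
  · intro g hg
    refine Finset.eq_of_subset_of_card_le ?_ (Finset.card_image_of_injective _ g.injective).ge
    refine Finset.image_subset_iff.2 fun x hx => ?_
    obtain ⟨h, hh, rfl⟩ := (hmem x).1 hx
    exact (hmem _).2 ⟨g * h, H.mul_mem hg hh, rfl⟩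
  · intro x hx y hy
    obtain ⟨g, hg, rfl⟩ := (hmem x).1 hx
    obtain ⟨h, hh, rfl⟩ := (hmem y).1 hy
    exact ⟨h * g⁻¹, H.mul_mem hh (H.inv_mem hg), by simp⟩

theorem stmt_10
    {Ω : Type*} [Fintype Ω] [DecidableEq Ω]
    (v k lam c d ℓ : ℕ)
    (𝓑 𝓒 : Finset (Finset Ω))
    (G : Subgroup (Equiv.Perm Ω))
    (hv : Fintype.card Ω = v)
    (hlam1 : 1 ≤ lam)
    (hkcard : ∀ B ∈ 𝓑, B.card = k)
    (hpairs : ∀ α β : Ω, α ≠ β → (𝓑.filter (fun B => α ∈ B ∧ β ∈ B)).card = lam)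
    (hk2 : 2 < k) (hkv : k < v)
    (hGB : ∀ g ∈ G, ∀ B ∈ 𝓑, B.image ⇑g ∈ 𝓑)
    (hflag : ∀ B₁ ∈ 𝓑, ∀ B₂ ∈ 𝓑, ∀ α₁ ∈ B₁, ∀ α₂ ∈ B₂,
        ∃ g ∈ G, B₁.image ⇑g = B₂ ∧ g α₁ = α₂)
    (hpart : ∀ ω : Ω, ∃! Δ, Δ ∈ 𝓒 ∧ ω ∈ Δ)
    (hdcard : 𝓒.card = d) (hd2 : 2 ≤ d)
    (hccard : ∀ Δ ∈ 𝓒, Δ.card = c) (hc2 : 2 ≤ c)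
    (hGC : ∀ g ∈ G, ∀ Δ ∈ 𝓒, Δ.image ⇑g ∈ 𝓒)
    (hl2 : 2 ≤ ℓ)
    (hlcap : ∀ B ∈ 𝓑, ∀ Δ ∈ 𝓒, (B ∩ Δ).Nonempty → (B ∩ Δ).card = ℓ)
    (hl3 : 3 ≤ ℓ)
    (Δ : Finset Ω) (hΔ : Δ ∈ 𝓒) (α β : Ω) (hα : α ∈ Δ) (hβ : β ∈ Δ) (hαβ : α ≠ β)
    : -- L_{α,β} has an orbit in Δ \ {α,β} of size at most (ℓ-2)λ
      (∃ O : Finset Ω, O.Nonempty ∧ O ⊆ Δ \ {α, β} ∧ O.card ≤ (ℓ - 2) * lam ∧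
        (∀ g ∈ G, Δ.image ⇑g = Δ → ({α, β} : Finset Ω).image ⇑g = {α, β} → O.image ⇑g = O) ∧
        (∀ γ ∈ O, ∀ γ' ∈ O, ∃ g ∈ G, Δ.image ⇑g = Δ ∧
          ({α, β} : Finset Ω).image ⇑g = {α, β} ∧ g γ = γ')) ∧
      -- if c > 2 + (ℓ-2)λ then L is not 3-transitive on Δ
      (2 + (ℓ - 2) * lam < c →
        ¬ (∀ x ∈ Δ, ∀ y ∈ Δ, ∀ z ∈ Δ, ∀ x' ∈ Δ, ∀ y' ∈ Δ, ∀ z' ∈ Δ,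
            x ≠ y → x ≠ z → y ≠ z → x' ≠ y' → x' ≠ z' → y' ≠ z' →
            ∃ g ∈ G, Δ.image ⇑g = Δ ∧ g x = x' ∧ g y = y' ∧ g z = z')) := by
  have hblock : ∀ B ∈ 𝓑, α ∈ B → β ∈ B → ((B ∩ Δ) \ {α, β}).card = ℓ - 2 := by
    intro B hB hαB hβB
    have hsub : ({α, β} : Finset Ω) ⊆ B ∩ Δ := by
      simp [Finset.insert_subset_iff, hα, hβ, hαB, hβB]
    rw [Finset.card_sdiff_of_subset hsub, Finset.card_pair hαβ,
      hlcap B hB Δ hΔ ⟨α, hsub (Finset.mem_insert_self α _)⟩]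
  let 𝓟 := 𝓑.filter (fun B => α ∈ B ∧ β ∈ B)
  have hcard𝓟 : 𝓟.card = lam := hpairs α β hαβ
  let S : Finset Ω := 𝓟.biUnion fun B => (B ∩ Δ) \ {α, β}
  have hScard : S.card ≤ (ℓ - 2) * lam := by
    rw [mul_comm, ← hcard𝓟]
    refine Finset.card_biUnion_le_card_mul _ _ _ fun B hB => ?_
    obtain ⟨hB, hαB, hβB⟩ := Finset.mem_filter.1 hB
    exact (hblock B hB hαB hβB).le
  have hSne : S.Nonempty := by
    obtain ⟨B, hB⟩ := Finset.card_pos.1 (hcard𝓟 ▸ hlam1 : 0 < 𝓟.card)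
    obtain ⟨hB', hαB, hβB⟩ := Finset.mem_filter.1 hB
    obtain ⟨x, hx⟩ := Finset.card_pos.1
      (by rw [hblock B hB' hαB hβB]; omega : 0 < ((B ∩ Δ) \ {α, β}).card)
    exact ⟨x, Finset.mem_biUnion.2 ⟨B, hB, hx⟩⟩
  have hSsub : S ⊆ Δ \ {α, β} := Finset.biUnion_subset.2 fun B _ =>
    Finset.sdiff_subset_sdiff Finset.inter_subset_right subset_rfl
  have hSinv : ∀ g ∈ setwiseStabilizer G Δ {α, β}, ∀ x ∈ S, g x ∈ S := by
    intro g hg x hx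
    obtain ⟨hgG, hgΔ, hgp⟩ := mem_setwiseStabilizer.1 hg
    obtain ⟨B, hB, hx⟩ := Finset.mem_biUnion.1 hx
    obtain ⟨hB, hαB, hβB⟩ := Finset.mem_filter.1 hB
    have hpB : ({α, β} : Finset Ω) ⊆ B.image ⇑g := by
      rw [← hgp]
      exact Finset.image_subset_image (by simp [Finset.insert_subset_iff, hαB, hβB])
    refine Finset.mem_biUnion.2 ⟨B.image ⇑g, Finset.mem_filter.2
      ⟨hGB g hgG B hB, hpB (by simp), hpB (by simp)⟩, ?_⟩
    have himage : ((B ∩ Δ) \ {α, β}).image ⇑g = (B.image ⇑g ∩ Δ) \ {α, β} := by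
      rw [Finset.image_sdiff _ _ g.injective, Finset.image_inter _ _ g.injective, hgΔ, hgp]
    exact himage ▸ Finset.mem_image_of_mem _ hx
  obtain ⟨O, hOS, hOne, hOinv, hOtrans⟩ := exists_orbit_subset_of_invariant _ S hSne hSinv
  have hOcard := (Finset.card_le_card hOS).trans hScard
  have hOΔ := hOS.trans hSsub
  refine ⟨⟨O, hOne, hOΔ, hOcard, fun g hg hgΔ hgp =>
    hOinv g (mem_setwiseStabilizer.2 ⟨hg, hgΔ, hgp⟩), ?_⟩, ?_⟩
  · intro x hx y hy
    obtain ⟨g, hg, hgxy⟩ := hOtrans x hx y hy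
    obtain ⟨hgG, hgΔ, hgp⟩ := mem_setwiseStabilizer.1 hg
    exact ⟨g, hgG, hgΔ, hgp, hgxy⟩
  · intro hc h3
    obtain ⟨γ, hγ⟩ := hOne
    have hΔO : Δ \ {α, β} ⊆ O := by
      intro z hz
      have hγ' := hOΔ hγ
      simp only [Finset.mem_sdiff, Finset.mem_insert, Finset.mem_singleton, not_or] at hz hγ'
      obtain ⟨hzΔ, hzα, hzβ⟩ := hz
      obtain ⟨hγΔ, hγα, hγβ⟩ := hγ'
      obtain ⟨g, hg, hgΔ, hgα, hgβ, hgγ⟩ := h3 α hα β hβ γ hγΔ α hα β hβ z hzΔ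
        hαβ (Ne.symm hγα) (Ne.symm hγβ) hαβ (Ne.symm hzα) (Ne.symm hzβ)
      rw [← hOinv g (mem_setwiseStabilizer.2
        ⟨hg, hgΔ, by simp [Finset.image_insert, hgα, hgβ]⟩), ← hgγ]
      exact Finset.mem_image_of_mem _ hγ
    have hle := (Finset.card_le_card hΔO).trans hOcard
    rw [Finset.card_sdiff_of_subset (by simp [Finset.insert_subset_iff, hα, hβ]),
      Finset.card_pair hαβ, hccard Δ hΔ] at hle
    omega
end

section
/- Assume Hypothesis (H), and suppose p is a prime dividing |G| such that p does not divide λ. Suppose a nontrivial p-subgroup P ≤ G fixes two distinct points α, β, and let Δ ∈ C be the class containing α. Then P fixes setwise at least one block B containing {α,β}, and hence P leaves invariant the ℓ-subset B ∩ Δ of Δ and the (k/ℓ)-subset C(B) = {Δ' ∈ C : B ∩ Δ' ≠ ∅} of C. -/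
/-- A `p`-group of permutations preserving a finite family of finite sets, whose number of members
is not divisible by `p`, fixes some member of the family. -/
theorem IsPGroup.exists_mem_forall_image_eq {Ω : Type*} [DecidableEq Ω] {p : ℕ} (hp : p.Prime)
    {Q : Subgroup (Equiv.Perm Ω)} (hQ : IsPGroup p Q) {S : Finset (Finset Ω)}
    (hS : ∀ g ∈ Q, ∀ B ∈ S, B.image ⇑g ∈ S) (hcard : ¬ p ∣ S.card) :
    ∃ B ∈ S, ∀ g ∈ Q, B.image ⇑g = B := by
  have : Fact p.Prime := ⟨hp⟩
  let _ : MulAction Q S :=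
    { smul := fun g B => ⟨B.1.image ⇑g.1, hS g.1 g.2 B.1 B.2⟩
      one_smul := fun B => Subtype.ext (Finset.image_id (s := B.1))
      mul_smul := fun g h B => Subtype.ext
        (Finset.image_image (s := B.1) (f := ⇑h.1) (g := ⇑g.1)).symm }
  obtain ⟨B, hB⟩ := hQ.nonempty_fixed_point_of_prime_not_dvd_card S (by simpa using hcard)
  exact ⟨B.1, B.2, fun g hg => congrArg Subtype.val (hB ⟨g, hg⟩)⟩

theorem stmt_11
    {Ω : Type*} [Fintype Ω] [DecidableEq Ω]
    (v k lam c d ℓ : ℕ)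
    (𝓑 𝓒 : Finset (Finset Ω))
    (G : Subgroup (Equiv.Perm Ω))
    (hv : Fintype.card Ω = v)
    (hlam1 : 1 ≤ lam)
    (hkcard : ∀ B ∈ 𝓑, B.card = k)
    (hpairs : ∀ α β : Ω, α ≠ β → (𝓑.filter (fun B => α ∈ B ∧ β ∈ B)).card = lam)
    (hk2 : 2 < k) (hkv : k < v)
    (hGB : ∀ g ∈ G, ∀ B ∈ 𝓑, B.image ⇑g ∈ 𝓑)
    (hflag : ∀ B₁ ∈ 𝓑, ∀ B₂ ∈ 𝓑, ∀ α₁ ∈ B₁, ∀ α₂ ∈ B₂,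
        ∃ g ∈ G, B₁.image ⇑g = B₂ ∧ g α₁ = α₂)
    (hpart : ∀ ω : Ω, ∃! Δ, Δ ∈ 𝓒 ∧ ω ∈ Δ)
    (hdcard : 𝓒.card = d) (hd2 : 2 ≤ d)
    (hccard : ∀ Δ ∈ 𝓒, Δ.card = c) (hc2 : 2 ≤ c)
    (hGC : ∀ g ∈ G, ∀ Δ ∈ 𝓒, Δ.image ⇑g ∈ 𝓒)
    (hl2 : 2 ≤ ℓ)
    (hlcap : ∀ B ∈ 𝓑, ∀ Δ ∈ 𝓒, (B ∩ Δ).Nonempty → (B ∩ Δ).card = ℓ)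
    (p : ℕ) (hp : p.Prime) (hpG : p ∣ Nat.card ↥G) (hplam : ¬ p ∣ lam)
    (Q : Subgroup (Equiv.Perm Ω)) (hQG : Q ≤ G) (hQp : IsPGroup p ↥Q) (hQnt : Q ≠ ⊥)
    (α β : Ω) (hαβ : α ≠ β)
    (hfix : ∀ g ∈ Q, g α = α ∧ g β = β)
    (Δ : Finset Ω) (hΔ : Δ ∈ 𝓒) (hαΔ : α ∈ Δ)
    : ∃ B ∈ 𝓑, α ∈ B ∧ β ∈ B ∧
      (∀ g ∈ Q, B.image ⇑g = B) ∧
      (∀ g ∈ Q, (B ∩ Δ).image ⇑g = B ∩ Δ) ∧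
      (∀ g ∈ Q, ∀ Δ' ∈ 𝓒, ((B ∩ Δ').Nonempty ↔ (B ∩ Δ'.image ⇑g).Nonempty)) := by
  obtain ⟨B, hB, hfixB⟩ := hQp.exists_mem_forall_image_eq hp
    (S := 𝓑.filter (fun B => α ∈ B ∧ β ∈ B))
    (fun g hg B hB => by
      rw [Finset.mem_filter] at hB ⊢
      exact ⟨hGB g (hQG hg) B hB.1,
        Finset.mem_image.2 ⟨α, hB.2.1, (hfix g hg).1⟩,
        Finset.mem_image.2 ⟨β, hB.2.2, (hfix g hg).2⟩⟩)
    (by rwa [hpairs α β hαβ])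
  obtain ⟨hB, hαB, hβB⟩ := Finset.mem_filter.1 hB
  refine ⟨B, hB, hαB, hβB, hfixB, fun g hg => ?_, fun g hg Δ' _ => ?_⟩
  · have hΔg : Δ.image ⇑g = Δ := (hpart α).unique
      ⟨hGC g (hQG hg) Δ hΔ, Finset.mem_image.2 ⟨α, hαΔ, (hfix g hg).1⟩⟩ ⟨hΔ, hαΔ⟩
    rw [Finset.image_inter _ _ g.injective, hfixB g hg, hΔg]
  · conv_rhs => rw [← hfixB g hg]
    rw [← Finset.image_inter _ _ g.injective, Finset.image_nonempty]
end

section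
/- Assume Hypothesis (H) and let Δ ∈ C. Then there exists a positive integer θ dividing λ such that for every nonempty set of the form B ∩ Δ with B ∈ B, the number of blocks B' ∈ B with B' ∩ Δ = B ∩ Δ equals θ, and every pair of distinct points of Δ lies in exactly λ/θ distinct ℓ-subsets of Δ of the form B ∩ Δ (B ∈ B); that is, the induced incidence structure D(Δ) on Δ, with blocks the nonempty intersections B ∩ Δ counted with multiplicity, is a 2-(c, ℓ, λ) design with constant block multiplicity θ. -/
/-- A permutation preserving `𝓑` and `Δ` that maps `B₁` to `B₂` injects the blocks
with the same trace on `Δ` as `B₁` into those with the same trace as `B₂`. -/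
theorem card_filter_inter_eq_le_of_image_eq {Ω : Type*} [DecidableEq Ω]
    {𝓑 : Finset (Finset Ω)} {Δ B₁ B₂ : Finset Ω} (g : Equiv.Perm Ω)
    (hg : ∀ B ∈ 𝓑, B.image g ∈ 𝓑) (hB : B₁.image g = B₂) (hΔ : Δ.image g = Δ) :
    (𝓑.filter (fun B => B ∩ Δ = B₁ ∩ Δ)).card ≤ (𝓑.filter (fun B => B ∩ Δ = B₂ ∩ Δ)).card := by
  refine Finset.card_le_card_of_injOn (fun B => B.image g) ?_
    (Finset.image_injective g.injective).injOn
  intro B hBm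
  obtain ⟨hmem, htrace⟩ := Finset.mem_filter.mp hBm
  refine Finset.mem_coe.mpr (Finset.mem_filter.mpr ⟨hg B hmem, ?_⟩)
  have h := congrArg (Finset.image g) htrace
  rwa [Finset.image_inter _ _ g.injective, Finset.image_inter _ _ g.injective, hΔ, hB] at h

/-- If every trace on `Δ` of a block meeting `Δ` comes from exactly `θ` blocks, then the blocks
through two points `α, β` of `Δ` number `θ` times their distinct traces. -/
theorem card_filter_mem_eq_card_image_inter_mul {Ω : Type*} [DecidableEq Ω]
    {𝓑 : Finset (Finset Ω)} {Δ : Finset Ω} {θ : ℕ}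
    (hθ : ∀ B ∈ 𝓑, (B ∩ Δ).Nonempty → (𝓑.filter (fun B' => B' ∩ Δ = B ∩ Δ)).card = θ)
    {α β : Ω} (hα : α ∈ Δ) (hβ : β ∈ Δ) :
    (𝓑.filter (fun B => α ∈ B ∧ β ∈ B)).card =
      ((𝓑.filter (fun B => α ∈ B ∧ β ∈ B)).image (fun B => B ∩ Δ)).card * θ := by
  rw [Finset.card_eq_sum_card_image (fun B => B ∩ Δ) (𝓑.filter (fun B => α ∈ B ∧ β ∈ B))]
  refine Finset.sum_const_nat fun T hT => ?_
  obtain ⟨B, hB, rfl⟩ := Finset.mem_image.mp hT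
  obtain ⟨hB, hαB, hβB⟩ := Finset.mem_filter.mp hB
  rw [← hθ B hB ⟨α, Finset.mem_inter.mpr ⟨hαB, hα⟩⟩, Finset.filter_filter]
  congr 1
  refine Finset.filter_congr fun B' _ => and_iff_right_of_imp fun h => ?_
  have mem_of_mem : ∀ x ∈ B, x ∈ Δ → x ∈ B' := fun x hx hxΔ =>
    (Finset.mem_inter.mp (h ▸ Finset.mem_inter.mpr ⟨hx, hxΔ⟩)).1
  exact ⟨mem_of_mem α hαB hα, mem_of_mem β hβB hβ⟩

theorem stmt_14
    {Ω : Type*} [Fintype Ω] [DecidableEq Ω]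
    (v k lam c d ℓ : ℕ)
    (𝓑 𝓒 : Finset (Finset Ω))
    (G : Subgroup (Equiv.Perm Ω))
    (hv : Fintype.card Ω = v)
    (hlam1 : 1 ≤ lam)
    (hkcard : ∀ B ∈ 𝓑, B.card = k)
    (hpairs : ∀ α β : Ω, α ≠ β → (𝓑.filter (fun B => α ∈ B ∧ β ∈ B)).card = lam)
    (hk2 : 2 < k) (hkv : k < v)
    (hGB : ∀ g ∈ G, ∀ B ∈ 𝓑, B.image ⇑g ∈ 𝓑)
    (hflag : ∀ B₁ ∈ 𝓑, ∀ B₂ ∈ 𝓑, ∀ α₁ ∈ B₁, ∀ α₂ ∈ B₂,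
        ∃ g ∈ G, B₁.image ⇑g = B₂ ∧ g α₁ = α₂)
    (hpart : ∀ ω : Ω, ∃! Δ, Δ ∈ 𝓒 ∧ ω ∈ Δ)
    (hdcard : 𝓒.card = d) (hd2 : 2 ≤ d)
    (hccard : ∀ Δ ∈ 𝓒, Δ.card = c) (hc2 : 2 ≤ c)
    (hGC : ∀ g ∈ G, ∀ Δ ∈ 𝓒, Δ.image ⇑g ∈ 𝓒)
    (hl2 : 2 ≤ ℓ)
    (hlcap : ∀ B ∈ 𝓑, ∀ Δ ∈ 𝓒, (B ∩ Δ).Nonempty → (B ∩ Δ).card = ℓ)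
    (Δ : Finset Ω) (hΔ : Δ ∈ 𝓒)
    : ∃ θ : ℕ, 0 < θ ∧ θ ∣ lam ∧
      -- each nonempty trace B ∩ Δ arises from exactly θ blocks of 𝓑
      (∀ B ∈ 𝓑, (B ∩ Δ).Nonempty →
        (𝓑.filter (fun B' => B' ∩ Δ = B ∩ Δ)).card = θ) ∧
      -- each pair of distinct points of Δ lies in exactly λ/θ distinct traces B ∩ Δ
      (∀ α ∈ Δ, ∀ β ∈ Δ, α ≠ β →
        ((𝓑.filter (fun B => α ∈ B ∧ β ∈ B)).image (fun B => B ∩ Δ)).card = lam / θ) := by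
  have trace_le : ∀ B₁ ∈ 𝓑, (B₁ ∩ Δ).Nonempty → ∀ B₂ ∈ 𝓑, (B₂ ∩ Δ).Nonempty →
      (𝓑.filter (fun B => B ∩ Δ = B₁ ∩ Δ)).card ≤
        (𝓑.filter (fun B => B ∩ Δ = B₂ ∩ Δ)).card := by
    rintro B₁ hB₁ ⟨α₁, h₁⟩ B₂ hB₂ ⟨α₂, h₂⟩
    rw [Finset.mem_inter] at h₁ h₂
    obtain ⟨g, hg, hgB, hgα⟩ := hflag B₁ hB₁ B₂ hB₂ α₁ h₁.1 α₂ h₂.1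
    exact card_filter_inter_eq_le_of_image_eq g (hGB g hg) hgB <| (hpart α₂).unique
      ⟨hGC g hg Δ hΔ, hgα ▸ Finset.mem_image_of_mem g h₁.2⟩ ⟨hΔ, h₂.2⟩
  obtain ⟨α, hα, β, hβ, hαβ⟩ := Finset.one_lt_card.mp (lt_of_lt_of_eq hc2 (hccard Δ hΔ).symm)
  obtain ⟨B₀, hB₀⟩ := Finset.card_pos.mp (lt_of_lt_of_eq hlam1 (hpairs α β hαβ).symm)
  obtain ⟨hB₀, hαB₀, -⟩ := Finset.mem_filter.mp hB₀
  have hne : (B₀ ∩ Δ).Nonempty := ⟨α, Finset.mem_inter.mpr ⟨hαB₀, hα⟩⟩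
  have hθ : ∀ B ∈ 𝓑, (B ∩ Δ).Nonempty → (𝓑.filter (fun B' => B' ∩ Δ = B ∩ Δ)).card =
      (𝓑.filter (fun B' => B' ∩ Δ = B₀ ∩ Δ)).card := fun B hB h =>
    (trace_le B hB h B₀ hB₀ hne).antisymm (trace_le B₀ hB₀ hne B hB h)
  have hpos : 0 < (𝓑.filter (fun B' => B' ∩ Δ = B₀ ∩ Δ)).card :=
    Finset.card_pos.mpr ⟨B₀, Finset.mem_filter.mpr ⟨hB₀, rfl⟩⟩
  have hcount := fun x (hx : x ∈ Δ) y (hy : y ∈ Δ) (hxy : x ≠ y) =>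
    (hpairs x y hxy).symm.trans (card_filter_mem_eq_card_image_inter_mul hθ hx hy)
  exact ⟨_, hpos, Dvd.intro_left _ (hcount α hα β hβ hαβ).symm, hθ, fun x hx y hy hxy =>
    (Nat.div_eq_of_eq_mul_left hpos (hcount x hx y hy hxy)).symm⟩
end

section
/- Assume Hypothesis (H) with λ ∈ {3,4} and v ≥ 100. Then the permutation group D = G^C induced by G on the class partition C is primitive on C, and for each class Δ ∈ C the permutation group L = (G_Δ)^Δ induced on Δ by its setwise stabilizer is primitive on Δ. -/
open Finset

section Counting

variable {Ω : Type*} [DecidableEq Ω]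

/-- Counting pairs `(β, B)` with `β ∈ T`, `α, β ∈ B`, when every block through `α ∈ T`
meets `T` in `l` points. -/
lemma card_blocks_mul_inter {𝓑 : Finset (Finset Ω)} {lam l : ℕ} {T : Finset Ω} {α : Ω}
    (hpairs : ∀ α β : Ω, α ≠ β → (𝓑.filter (fun B => α ∈ B ∧ β ∈ B)).card = lam)
    (hα : α ∈ T) (hl : ∀ B ∈ 𝓑, α ∈ B → (B ∩ T).card = l) :
    (𝓑.filter (α ∈ ·)).card * l + lam = lam * T.card + (𝓑.filter (α ∈ ·)).card := by
  have h1 : ∑ β ∈ T, (𝓑.filter (fun B => α ∈ B ∧ β ∈ B)).card =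
      ∑ B ∈ 𝓑.filter (α ∈ ·), (B ∩ T).card := by
    have := sum_card_bipartiteAbove_eq_sum_card_bipartiteBelow
      (s := T) (t := 𝓑.filter (α ∈ ·)) (fun β B => β ∈ B)
    simp only [bipartiteAbove, bipartiteBelow, filter_filter, filter_mem_eq_inter] at this
    rw [this]
    exact sum_congr rfl fun B _ => by rw [inter_comm]
  have h2 : ∑ B ∈ 𝓑.filter (α ∈ ·), (B ∩ T).card = (𝓑.filter (α ∈ ·)).card * l := by
    rw [sum_const_nat fun B hB => hl B (mem_filter.1 hB).1 (mem_filter.1 hB).2]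
  have h3 : ∑ β ∈ T.erase α, (𝓑.filter (fun B => α ∈ B ∧ β ∈ B)).card =
      (T.erase α).card * lam :=
    sum_const_nat fun β hβ => hpairs α β (ne_of_mem_erase hβ).symm
  have h4 := add_sum_erase T (fun β => (𝓑.filter (fun B => α ∈ B ∧ β ∈ B)).card) hα
  have h5 := card_erase_add_one hα
  simp only [and_self] at h4
  rw [h3, h1, h2] at h4
  rw [← h4, ← h5]
  ring

/-- Fisher's inequality in the form `k ≤ r`, by the variance of the block intersection sizes. -/
lemma fisher_block_size_le [Fintype Ω] {𝓑 : Finset (Finset Ω)} {k lam r : ℕ}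
    (hkcard : ∀ B ∈ 𝓑, B.card = k)
    (hpairs : ∀ α β : Ω, α ≠ β → (𝓑.filter (fun B => α ∈ B ∧ β ∈ B)).card = lam)
    (hr : ∀ α : Ω, (𝓑.filter (α ∈ ·)).card = r)
    (hrk : r * k + lam = lam * Fintype.card Ω + r)
    (hlam : 1 ≤ lam) (hk2 : 2 < k) (hkv : k < Fintype.card Ω)
    {B₀ : Finset Ω} (hB₀ : B₀ ∈ 𝓑) : k ≤ r := by
  have hbk : 𝓑.card * k = Fintype.card Ω * r := by
    have := sum_card_bipartiteAbove_eq_sum_card_bipartiteBelow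
      (s := (univ : Finset Ω)) (t := 𝓑) (fun β B => β ∈ B)
    simp only [bipartiteAbove, bipartiteBelow, filter_mem_eq_inter, univ_inter] at this
    rw [sum_const_nat fun α _ => hr α, sum_const_nat hkcard, card_univ] at this
    exact this.symm
  have hS1 : ∑ B ∈ 𝓑, (B ∩ B₀).card = k * r := by
    have := sum_card_bipartiteAbove_eq_sum_card_bipartiteBelow
      (s := B₀) (t := 𝓑) (fun β B => β ∈ B)
    simp only [bipartiteAbove, bipartiteBelow, filter_mem_eq_inter] at this
    rw [sum_const_nat fun α _ => hr α, hkcard B₀ hB₀] at this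
    rw [this]
    exact sum_congr rfl fun B _ => by rw [inter_comm]
  have hS2 : ∑ B ∈ 𝓑, (B ∩ B₀).card ^ 2 + k * lam = k * (r + k * lam) := by
    have h1 := sum_card_bipartiteAbove_eq_sum_card_bipartiteBelow
      (s := B₀ ×ˢ B₀) (t := 𝓑) (fun p B => p.1 ∈ B ∧ p.2 ∈ B)
    simp only [bipartiteAbove, bipartiteBelow] at h1
    have h2 : ∀ B, (B₀ ×ˢ B₀).filter (fun p => p.1 ∈ B ∧ p.2 ∈ B) = (B ∩ B₀) ×ˢ (B ∩ B₀) := by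
      intro B; ext p; simp only [mem_filter, mem_product, mem_inter]; tauto
    simp only [h2, card_product, ← sq] at h1
    rw [← h1, sum_product]
    have h3 : ∀ α ∈ B₀, ∑ β ∈ B₀, (𝓑.filter (fun B => α ∈ B ∧ β ∈ B)).card + lam =
        r + k * lam := by
      intro α hα
      have h4 := add_sum_erase B₀ (fun β => (𝓑.filter (fun B => α ∈ B ∧ β ∈ B)).card) hα
      have h5 := card_erase_add_one hα
      rw [sum_const_nat fun β hβ => hpairs α β (ne_of_mem_erase hβ).symm] at h4
      simp only [and_self] at h4
      rw [hr α] at h4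
      rw [hkcard B₀ hB₀] at h5
      rw [← h4, ← h5]
      ring
    have h6 := sum_const_nat h3
    rw [sum_add_distrib, hkcard B₀ hB₀, sum_const, hkcard B₀ hB₀, smul_eq_mul] at h6
    exact h6
  have hself : (B₀ ∩ B₀).card = k := by rw [inter_self, hkcard B₀ hB₀]
  have hT1 := add_sum_erase 𝓑 (fun B => (B ∩ B₀).card) hB₀
  have hT2 := add_sum_erase 𝓑 (fun B => (B ∩ B₀).card ^ 2) hB₀
  have hcs := sq_sum_le_card_mul_sum_sq (s := 𝓑.erase B₀) (f := fun B => ((B ∩ B₀).card : ℤ))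
  have hb := card_erase_add_one hB₀
  simp only [hself] at hT1 hT2
  rw [hS1] at hT1
  zify at *
  have e1 : ∑ B ∈ 𝓑.erase B₀, ((B ∩ B₀).card : ℤ) = k * r - k := by linarith
  have e2 : ∑ B ∈ 𝓑.erase B₀, ((B ∩ B₀).card : ℤ) ^ 2 = k * (r + k * lam) - k * lam - k ^ 2 := by
    linarith
  rw [e1, e2, eq_sub_of_add_eq hb] at hcs
  generalize (𝓑.card : ℤ) = b at *
  generalize (Fintype.card Ω : ℤ) = v at *
  generalize (k : ℤ) = k at *
  generalize (r : ℤ) = r at *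
  generalize (lam : ℤ) = l at *
  have hn : 0 < (r - l) * (k - 1) := by
    have : (r - l) * (k - 1) = l * (v - k) := by linear_combination hrk
    rw [this]
    exact mul_pos (by linarith) (by linarith)
  have hn' : 0 < r - l := pos_of_mul_pos_left hn (by linarith)
  have key : l * ((b - 1) * (k * (r + k * l) - k * l - k ^ 2) - (k * r - k) ^ 2) =
      (r - l) ^ 2 * ((k - 1) * (r - k)) := by
    linear_combination l * (r + k * l - l - k) * hbk - r * (r + k * l - l - k) * hrk
  have h0 : 0 ≤ (r - l) ^ 2 * ((k - 1) * (r - k)) := by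
    rw [← key]
    exact mul_nonneg (by linarith) (by linarith)
  have h1 := nonneg_of_mul_nonneg_right h0 (by positivity)
  have h2 := nonneg_of_mul_nonneg_right h1 (by linarith)
  linarith

end Counting

/-- Nested proper invariant partitions of a design with `λ ≤ 4` and at least `9` points violate
the parameter equations. -/
lemma nested_parameters_false {r k lam c m d l l' : ℕ}
    (hc : r * l + lam = lam * c + r)
    (hc' : r * l' + lam = lam * (c * m) + r)
    (hv : r * k + lam = lam * (c * m * d) + r)
    (hc2 : 2 ≤ c) (hm : 2 ≤ m) (hd : 2 ≤ d) (hkr : k ≤ r) (hlam1 : 1 ≤ lam) (hlam : lam ≤ 4)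
    (hv8 : 8 < c * m * d) (hk : 0 < k) : False := by
  zify at *
  obtain ⟨a, ha⟩ : ∃ a : ℤ, a = l - 1 := ⟨_, rfl⟩
  obtain ⟨a', ha'⟩ : ∃ a : ℤ, a = l' - 1 := ⟨_, rfl⟩
  obtain ⟨x, hx⟩ : ∃ x : ℤ, x = k - 1 - d * a' := ⟨_, rfl⟩
  generalize (r : ℤ) = r at *
  generalize (k : ℤ) = k at *
  generalize (lam : ℤ) = n at *
  generalize (c : ℤ) = c at *
  generalize (m : ℤ) = m at *
  generalize (d : ℤ) = d at *
  generalize (l : ℤ) = l at *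
  generalize (l' : ℤ) = l' at *
  have h1 : r * a = n * (c - 1) := by subst ha; linear_combination hc
  have h2 : r * a' = n * (c * m - 1) := by subst ha'; linear_combination hc'
  have h3 : r * x = n * (d - 1) := by subst hx ha'; linear_combination hv - d * hc'
  have hr0 : 0 < r := by linarith
  have hcm : c < c * m := by nlinarith
  have ha0 : 0 < a := pos_of_mul_pos_right (h1 ▸ mul_pos (by linarith) (by linarith)) hr0.le
  have hx0 : 0 < x := pos_of_mul_pos_right (h3 ▸ mul_pos (by linarith) (by linarith)) hr0.le
  have haa : a < a' := by
    refine lt_of_mul_lt_mul_left ?_ hr0.le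
    rw [h1, h2]
    exact mul_lt_mul_of_pos_left (by linarith) (by linarith)
  have hxa : x * a' < n := by
    have : r * (x * a') < r * n := by
      have : d * a' < r := by linarith
      nlinarith
    exact lt_of_mul_lt_mul_left this hr0.le
  have ha3 : a' ≤ 3 := by nlinarith
  have hprop : a' * (c - 1) = a * (c * m - 1) := by
    refine mul_left_cancel₀ hr0.ne' ?_
    linear_combination (c * m - 1) * (-h1) + (c - 1) * h2
  have hm2 : 2 * c ≤ c * m := by nlinarith
  obtain ⟨rfl, rfl⟩ : a' = 3 ∧ a = 1 := by
    have h2' : 2 ≤ a' := by linarith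
    interval_cases a' <;> interval_cases a <;> omega
  obtain rfl : x = 1 := by linarith
  have hcm' : c * m = 3 * c - 2 := by linarith
  have hm3 : m < 3 := by nlinarith
  obtain rfl : m = 2 := by linarith
  obtain rfl : c = 2 := by linarith
  have : n * (d - 1) = n * 1 := by linear_combination h1 - h3
  nlinarith

section Blocks

variable {Ω : Type*} [DecidableEq Ω]

/-- The size of a block of imprimitivity for the setwise stabilizer of `U`, transitive on `U`,
divides the size of `U`. -/
lemma card_block_dvd_card {G : Subgroup (Equiv.Perm Ω)} {S U : Finset Ω} (hSU : S ⊆ U)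
    (hS : S.Nonempty)
    (htrans : ∀ α ∈ U, ∀ β ∈ U, ∃ g ∈ G, U.image ⇑g = U ∧ g α = β)
    (hblock : ∀ g ∈ G, U.image ⇑g = U → (S.image ⇑g = S ∨ Disjoint (S.image ⇑g) S)) :
    S.card ∣ U.card := by
  classical
  obtain ⟨α, hα⟩ := hS
  let P := U.powerset.filter fun W => ∃ g ∈ G, U.image ⇑g = U ∧ S.image ⇑g = W
  have hU : U = P.biUnion id := by
    ext β
    simp only [P, mem_biUnion, mem_filter, mem_powerset, id]
    constructor
    · intro hβ
      obtain ⟨g, hg, hgU, rfl⟩ := htrans α (hSU hα) β hβ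
      exact ⟨S.image g, ⟨hgU ▸ image_subset_image hSU, g, hg, hgU, rfl⟩, mem_image_of_mem _ hα⟩
    · rintro ⟨W, ⟨hW, -⟩, hβ⟩
      exact hW hβ
  have hdisj : ∀ W₁ ∈ P, ∀ W₂ ∈ P, W₁ ≠ W₂ → Disjoint (id W₁) (id W₂) := by
    intro W₁ h₁ W₂ h₂ hne
    obtain ⟨g, hg, hgU, rfl⟩ := (mem_filter.1 h₁).2
    obtain ⟨h, hh, hhU, rfl⟩ := (mem_filter.1 h₂).2
    have hcomp : ∀ W : Finset Ω, (W.image ⇑(h⁻¹ * g)).image ⇑h = W.image ⇑g := by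
      intro W
      rw [image_image, ← Equiv.Perm.coe_mul, mul_inv_cancel_left]
    have hstab : U.image ⇑(h⁻¹ * g) = U := by
      apply image_injective h.injective
      rw [hcomp, hgU, hhU]
    rcases hblock (h⁻¹ * g) (G.mul_mem (G.inv_mem hh) hg) hstab with h' | h'
    · exact absurd (by rw [← hcomp, h']) hne
    · rw [id, id, ← hcomp, disjoint_image h.injective]
      exact h'
  have hcard : ∀ W ∈ P, (id W).card = S.card := by
    intro W hW
    obtain ⟨g, -, -, rfl⟩ := (mem_filter.1 hW).2
    exact card_image_of_injective _ g.injective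
  rw [hU, card_biUnion hdisj, sum_const_nat hcard]
  exact dvd_mul_left _ _

/-- By flag-transitivity, all blocks of a design meeting a block of imprimitivity `T`
meet it in the same number of points. -/
lemma exists_inter_card {𝓑 : Finset (Finset Ω)} {G : Subgroup (Equiv.Perm Ω)}
    (hflag : ∀ B₁ ∈ 𝓑, ∀ B₂ ∈ 𝓑, ∀ α₁ ∈ B₁, ∀ α₂ ∈ B₂,
        ∃ g ∈ G, B₁.image ⇑g = B₂ ∧ g α₁ = α₂)
    {T : Finset Ω} (hT : ∀ g ∈ G, T.image ⇑g = T ∨ Disjoint (T.image ⇑g) T)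
    {α : Ω} (hα : α ∈ T) :
    ∃ l, ∀ B ∈ 𝓑, α ∈ B → (B ∩ T).card = l := by
  by_cases h : ∃ B₀ ∈ 𝓑, α ∈ B₀
  · obtain ⟨B₀, hB₀, hα₀⟩ := h
    refine ⟨(B₀ ∩ T).card, fun B hB hαB => ?_⟩
    obtain ⟨g, hg, rfl, hgα⟩ := hflag B₀ hB₀ B hB α hα₀ α hαB
    have hgT : T.image ⇑g = T := (hT g hg).resolve_right fun hd =>
      disjoint_left.1 hd (hgα ▸ mem_image_of_mem _ hα) hα
    conv_lhs => rw [← hgT]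
    rw [← image_inter _ _ g.injective, card_image_of_injective _ g.injective]
  · push Not at h
    exact ⟨0, fun B hB hαB => absurd hαB (h B hB)⟩

/-- A flag-transitive design with `λ ≤ 4` on more than `8` points has no chain of two nested
nontrivial invariant partitions; `T ⊂ U` are classes of the two partitions. -/
lemma no_nested_blocks [Fintype Ω] {k lam : ℕ} {𝓑 : Finset (Finset Ω)}
    {G : Subgroup (Equiv.Perm Ω)}
    (hlam1 : 1 ≤ lam) (hlam4 : lam ≤ 4)
    (hkcard : ∀ B ∈ 𝓑, B.card = k)
    (hpairs : ∀ α β : Ω, α ≠ β → (𝓑.filter (fun B => α ∈ B ∧ β ∈ B)).card = lam)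
    (hk2 : 2 < k) (hkv : k < Fintype.card Ω) (hv8 : 8 < Fintype.card Ω)
    (hflag : ∀ B₁ ∈ 𝓑, ∀ B₂ ∈ 𝓑, ∀ α₁ ∈ B₁, ∀ α₂ ∈ B₂,
        ∃ g ∈ G, B₁.image ⇑g = B₂ ∧ g α₁ = α₂)
    {T U : Finset Ω} (hTU : T ⊂ U) (hUne : U ≠ univ) (hT2 : 2 ≤ T.card)
    (hTdvd : T.card ∣ U.card) (hUdvd : U.card ∣ Fintype.card Ω)
    (hT : ∀ g ∈ G, T.image ⇑g = T ∨ Disjoint (T.image ⇑g) T)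
    (hU : ∀ g ∈ G, U.image ⇑g = U ∨ Disjoint (U.image ⇑g) U) : False := by
  obtain ⟨α, hα⟩ : T.Nonempty := card_pos.1 (by omega)
  have hαU := hTU.subset hα
  have hcount : ∀ β : Ω, (𝓑.filter (β ∈ ·)).card * k + lam =
      lam * Fintype.card Ω + (𝓑.filter (β ∈ ·)).card := fun β =>
    card_blocks_mul_inter hpairs (mem_univ β) fun B hB _ => by rw [inter_univ, hkcard B hB]
  have hr : ∀ β : Ω, (𝓑.filter (β ∈ ·)).card = (𝓑.filter (α ∈ ·)).card := by
    intro β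
    have h1 := hcount α
    have h2 := hcount β
    obtain ⟨k, rfl⟩ : ∃ j, k = j + 1 := ⟨k - 1, by omega⟩
    refine Nat.eq_of_mul_eq_mul_right (show 0 < k by omega) ?_
    linarith
  obtain ⟨B₀, hB₀⟩ : 𝓑.Nonempty := by
    obtain ⟨β, hβ, hne⟩ := exists_mem_ne (by omega : 1 < T.card) α
    have h : 0 < (𝓑.filter (fun B => α ∈ B ∧ β ∈ B)).card := by
      rw [hpairs α β hne.symm]; omega
    obtain ⟨B, hB⟩ := card_pos.1 h
    exact ⟨B, (mem_filter.1 hB).1⟩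
  have hkr := fisher_block_size_le hkcard hpairs hr (hcount α) hlam1 hk2 hkv hB₀
  obtain ⟨l, hl⟩ := exists_inter_card hflag hT hα
  obtain ⟨l', hl'⟩ := exists_inter_card hflag hU hαU
  have h1 := card_blocks_mul_inter hpairs hα hl
  have h2 := card_blocks_mul_inter hpairs hαU hl'
  have h3 := hcount α
  have hlt := card_lt_card hTU
  have hlt' : U.card < Fintype.card Ω := card_lt_univ_of_notMem
    (by_contra fun h => hUne (eq_univ_of_forall (by simpa using h)) : ∃ x, x ∉ U).choose_spec
  obtain ⟨m, hm⟩ := hTdvd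
  obtain ⟨d, hd⟩ := hUdvd
  rw [hm] at h2 hd hlt hlt'
  rw [hd] at h3 hlt' hv8
  refine nested_parameters_false h1 h2 h3 hT2 ?_ ?_ hkr hlam1 hlam4 hv8 (by omega)
  · by_contra h
    interval_cases m <;> omega
  · by_contra h
    interval_cases d <;> omega

end Blocks

theorem stmt_16
    {Ω : Type*} [Fintype Ω] [DecidableEq Ω]
    (v k lam c d ℓ : ℕ)
    (𝓑 𝓒 : Finset (Finset Ω))
    (G : Subgroup (Equiv.Perm Ω))
    (hv : Fintype.card Ω = v)
    (hlam1 : 1 ≤ lam)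
    (hkcard : ∀ B ∈ 𝓑, B.card = k)
    (hpairs : ∀ α β : Ω, α ≠ β → (𝓑.filter (fun B => α ∈ B ∧ β ∈ B)).card = lam)
    (hk2 : 2 < k) (hkv : k < v)
    (hGB : ∀ g ∈ G, ∀ B ∈ 𝓑, B.image ⇑g ∈ 𝓑)
    (hflag : ∀ B₁ ∈ 𝓑, ∀ B₂ ∈ 𝓑, ∀ α₁ ∈ B₁, ∀ α₂ ∈ B₂,
        ∃ g ∈ G, B₁.image ⇑g = B₂ ∧ g α₁ = α₂)
    (hpart : ∀ ω : Ω, ∃! Δ, Δ ∈ 𝓒 ∧ ω ∈ Δ)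
    (hdcard : 𝓒.card = d) (hd2 : 2 ≤ d)
    (hccard : ∀ Δ ∈ 𝓒, Δ.card = c) (hc2 : 2 ≤ c)
    (hGC : ∀ g ∈ G, ∀ Δ ∈ 𝓒, Δ.image ⇑g ∈ 𝓒)
    (hl2 : 2 ≤ ℓ)
    (hlcap : ∀ B ∈ 𝓑, ∀ Δ ∈ 𝓒, (B ∩ Δ).Nonempty → (B ∩ Δ).card = ℓ)
    (hlam34 : lam = 3 ∨ lam = 4) (hv100 : 100 ≤ v)
    : -- D = G^𝓒 is transitive and primitive on 𝓒
      ((∀ Δ ∈ 𝓒, ∀ Δ' ∈ 𝓒, ∃ g ∈ G, Δ.image ⇑g = Δ') ∧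
        (∀ S : Finset (Finset Ω), S ⊆ 𝓒 →
          (∀ g ∈ G, S.image (fun Δ => Δ.image ⇑g) = S ∨
            Disjoint (S.image (fun Δ => Δ.image ⇑g)) S) →
          S.card ≤ 1 ∨ S = 𝓒)) ∧
      -- for every class Δ, L = (G_Δ)^Δ is transitive and primitive on Δ
      (∀ Δ ∈ 𝓒,
        (∀ α ∈ Δ, ∀ β ∈ Δ, ∃ g ∈ G, Δ.image ⇑g = Δ ∧ g α = β) ∧
        (∀ S : Finset Ω, S ⊆ Δ →
          (∀ g ∈ G, Δ.image ⇑g = Δ → (S.image ⇑g = S ∨ Disjoint (S.image ⇑g) S)) →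
          S.card ≤ 1 ∨ S = Δ)) := by
  classical
  have hlam4 : lam ≤ 4 := by omega
  subst hv
  have hclass : ∀ {ω Δ Δ'}, Δ ∈ 𝓒 → Δ' ∈ 𝓒 → ω ∈ Δ → ω ∈ Δ' → Δ = Δ' :=
    fun h h' hω hω' => (hpart _).unique ⟨h, hω⟩ ⟨h', hω'⟩
  have hne : ∀ Δ ∈ 𝓒, Δ.Nonempty := fun Δ hΔ => card_pos.1 (by rw [hccard Δ hΔ]; omega)
  have hblockC : ∀ Δ ∈ 𝓒, ∀ g ∈ G, Δ.image ⇑g = Δ ∨ Disjoint (Δ.image ⇑g) Δ := by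
    intro Δ hΔ g hg
    refine or_iff_not_imp_right.2 fun h => ?_
    obtain ⟨ω, h1, h2⟩ := not_disjoint_iff.1 h
    exact hclass (hGC g hg Δ hΔ) hΔ h1 h2
  have hcover : ∀ α : Ω, ∃ B ∈ 𝓑, α ∈ B := by
    intro α
    have : Nontrivial Ω := Fintype.one_lt_card_iff_nontrivial.1 (by omega)
    obtain ⟨β, hβ⟩ := exists_ne α
    have h : 0 < (𝓑.filter (fun B => α ∈ B ∧ β ∈ B)).card := by
      rw [hpairs α β hβ.symm]; omega
    obtain ⟨B, hB⟩ := card_pos.1 h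
    exact ⟨B, (mem_filter.1 hB).1, (mem_filter.1 hB).2.1⟩
  have htrans : ∀ α β : Ω, ∃ g ∈ G, g α = β := by
    intro α β
    obtain ⟨B₁, h₁, hα⟩ := hcover α
    obtain ⟨B₂, h₂, hβ⟩ := hcover β
    obtain ⟨g, hg, -, h⟩ := hflag B₁ h₁ B₂ h₂ α hα β hβ
    exact ⟨g, hg, h⟩
  have hdvd : ∀ T : Finset Ω, T.Nonempty →
      (∀ g ∈ G, T.image ⇑g = T ∨ Disjoint (T.image ⇑g) T) → T.card ∣ Fintype.card Ω := by
    intro T hT hblock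
    refine card_block_dvd_card (subset_univ T) hT (fun α _ β _ => ?_) fun g hg _ => hblock g hg
    obtain ⟨g, hg, h⟩ := htrans α β
    exact ⟨g, hg, image_univ_of_surjective g.surjective, h⟩
  have hClt : ∀ Δ ∈ 𝓒, Δ ≠ univ := by
    rintro Δ hΔ rfl
    obtain ⟨Δ', hΔ', hne'⟩ := exists_mem_ne (by omega : 1 < 𝓒.card) univ
    obtain ⟨ω, hω⟩ := hne Δ' hΔ'
    exact hne' (hclass hΔ' hΔ hω (mem_univ ω))
  refine ⟨⟨?_, ?_⟩, fun Δ hΔ => ?_⟩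
  · intro Δ hΔ Δ' hΔ'
    obtain ⟨α, hα⟩ := hne Δ hΔ
    obtain ⟨β, hβ⟩ := hne Δ' hΔ'
    obtain ⟨g, hg, rfl⟩ := htrans α β
    exact ⟨g, hg, hclass (hGC g hg Δ hΔ) hΔ' (mem_image_of_mem _ hα) hβ⟩
  · intro S hS hSblock
    by_contra! h
    obtain ⟨hcard, hSC⟩ := h
    obtain ⟨Δ, hΔ⟩ : S.Nonempty := card_pos.1 (by omega)
    obtain ⟨Δ', hΔ', hne'⟩ := exists_mem_ne hcard Δ
    have hmem : ∀ {ω Δ}, Δ ∈ 𝓒 → ω ∈ Δ → ω ∈ S.biUnion id → Δ ∈ S := by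
      intro ω Δ hΔ hω h
      obtain ⟨Δ', hΔ', hω'⟩ := mem_biUnion.1 h
      exact hclass hΔ (hS hΔ') hω hω' ▸ hΔ'
    have hΔsub : Δ ⊆ S.biUnion id := subset_biUnion_of_mem id hΔ
    have hblock : ∀ g ∈ G, (S.biUnion id).image ⇑g = S.biUnion id ∨
        Disjoint ((S.biUnion id).image ⇑g) (S.biUnion id) := by
      intro g hg
      have himage : (S.biUnion id).image ⇑g = (S.image fun Δ => Δ.image ⇑g).biUnion id := by
        rw [biUnion_image, image_biUnion]
        rfl
      refine (hSblock g hg).imp (fun h => by rw [himage, h]) fun h => ?_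
      rw [himage]
      refine disjoint_left.2 fun ω h1 h2 => ?_
      obtain ⟨W, hW, hωW⟩ := mem_biUnion.1 h1
      obtain ⟨W', hW', rfl⟩ := mem_image.1 hW
      exact disjoint_left.1 h hW (hmem (hGC g hg W' (hS hW')) hωW h2)
    refine no_nested_blocks (T := Δ) (U := S.biUnion id) hlam1 hlam4 hkcard hpairs hk2 hkv
      (by omega) hflag ?_ ?_ (by rw [hccard Δ (hS hΔ)]; exact hc2) ?_
      (hdvd _ ((hne Δ (hS hΔ)).mono hΔsub) hblock) (hblockC Δ (hS hΔ)) hblock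
    · refine hΔsub.ssubset_of_ne fun heq => hne' ?_
      obtain ⟨ω, hω⟩ := hne Δ' (hS hΔ')
      exact hclass (hS hΔ') (hS hΔ) hω (heq ▸ mem_biUnion.2 ⟨Δ', hΔ', hω⟩)
    · intro huniv
      refine hSC (hS.antisymm fun Δ hΔ => ?_)
      obtain ⟨ω, hω⟩ := hne Δ hΔ
      exact hmem hΔ hω (huniv ▸ mem_univ ω)
    · rw [card_biUnion (t := id) fun W hW W' hW' hWW => disjoint_left.2 fun ω h h' =>
        hWW (hclass (hS hW) (hS hW') h h'),
        sum_const_nat (f := fun W => (id W).card) (m := c) fun W hW => hccard W (hS hW), hccard Δ (hS hΔ)]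
      exact dvd_mul_left _ _
  · have htransΔ : ∀ α ∈ Δ, ∀ β ∈ Δ, ∃ g ∈ G, Δ.image ⇑g = Δ ∧ g α = β := by
      intro α hα β hβ
      obtain ⟨g, hg, rfl⟩ := htrans α β
      exact ⟨g, hg, hclass (hGC g hg Δ hΔ) hΔ (mem_image_of_mem _ hα) hβ, rfl⟩
    refine ⟨htransΔ, fun S hS hSblock => ?_⟩
    by_contra! h
    obtain ⟨hcard, hSΔ⟩ := h
    have hblock : ∀ g ∈ G, S.image ⇑g = S ∨ Disjoint (S.image ⇑g) S := by
      intro g hg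
      rcases hblockC Δ hΔ g hg with h | h
      · exact hSblock g hg h
      · exact Or.inr (h.mono (image_subset_image hS) hS)
    exact no_nested_blocks hlam1 hlam4 hkcard hpairs hk2 hkv (by omega) hflag
      (hS.ssubset_of_ne hSΔ) (hClt Δ hΔ) hcard
      (card_block_dvd_card hS (card_pos.1 (by omega)) htransΔ hSblock)
      (hdvd Δ (hne Δ hΔ) (hblockC Δ hΔ)) hblock (hblockC Δ hΔ)
end
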